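/- Let B be a finite-dimensional algebra over a field k such that B/rad(B) is a separable k-algebra. Then B is twisted periodic if and only if every simple right B-module is Ω-periodic. -/

import Mathlib

open TensorProduct

/-- There is an exact sequence `0 → M → P_n → ⋯ → P_1 → N → 0` of `R`-modules
(so with `n` middle terms) in which each middle term `P_i` is projective. -/
def HasProjExactSeq (R : Type) [Ring R] (M N : ModuleCat R) (n : ℕ) : Prop :=
  ∃ (P : ℕ → ModuleCat R) (d : ∀ i, P (i + 1) →ₗ[R] P i)
    (_ : (P 0 : Type) ≃ₗ[R] N) (_ : (M : Type) ≃ₗ[R] P (n + 1)),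
    (∀ i, 1 ≤ i → i ≤ n → Module.Projective R (P i)) ∧
    Function.Surjective (d 0) ∧ Function.Injective (d n) ∧
    ∀ i < n, LinearMap.range (d (i + 1)) = LinearMap.ker (d i)

/-- The regular bimodule `B` as a module over the enveloping algebra `B ⊗[k] Bᵐᵒᵖ`. -/
noncomputable def regularBimodule (k B : Type) [Field k] [Ring B] [Algebra k B] :
    ModuleCat (B ⊗[k] Bᵐᵒᵖ) :=
  letI : Module (B ⊗[k] Bᵐᵒᵖ) B := TensorProduct.Algebra.module
  ModuleCat.of _ B

/-- The twisted bimodule `₁B_φ` (underlying set `B`, right action twisted by `φ`,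
i.e. `a • x • b = a * x * φ b`) as a module over the enveloping algebra `B ⊗[k] Bᵐᵒᵖ`. -/
noncomputable def twistedBimodule (k B : Type) [Field k] [Ring B] [Algebra k B]
    (φ : B ≃ₐ[k] B) : ModuleCat (B ⊗[k] Bᵐᵒᵖ) :=
  letI : Module (B ⊗[k] Bᵐᵒᵖ) B := TensorProduct.Algebra.module
  letI : Module (B ⊗[k] Bᵐᵒᵖ) B :=
    Module.compHom B
      (Algebra.TensorProduct.map (AlgHom.id k B) (AlgEquiv.op φ).toAlgHom).toRingHom
  ModuleCat.of _ B

/-- A finite-dimensional `k`-algebra `B` is twisted periodic if there are `n ≥ 1`, an algebra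
automorphism `φ` of `B`, and an exact sequence `0 → ₁B_φ → P_{n-1} → ⋯ → P_0 → B → 0` of
bimodules with all `P_i` projective over `B ⊗[k] Bᵐᵒᵖ`. -/
noncomputable def IsTwistedPeriodicAlgebra (k B : Type) [Field k] [Ring B] [Algebra k B] : Prop :=
  ∃ (n : ℕ) (φ : B ≃ₐ[k] B), 1 ≤ n ∧
    HasProjExactSeq (B ⊗[k] Bᵐᵒᵖ) (twistedBimodule k B φ) (regularBimodule k B) n

section General

/-- Chains of short exact sequences with projective middle term; with `b` true, the
surjections are required to have small kernel. -/
inductive Syz (R : Type) [Ring R] (b : Prop) (K : ModuleCat.{0} R) : ℕ → ModuleCat.{0} R → Prop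
  | zero {M : ModuleCat.{0} R} (e : (K : Type) ≃ₗ[R] M) : Syz R b K 0 M
  | succ {n : ℕ} {M P Y : ModuleCat.{0} R} (i : Y →ₗ[R] P) (p : P →ₗ[R] M)
      (hP : Module.Projective R P) (hi : Function.Injective i) (hp : Function.Surjective p)
      (hex : Function.Exact i p)
      (hb : b → LinearMap.ker p ≤ Ring.jacobson R • (⊤ : Submodule R P))
      (h : Syz R b K n Y) : Syz R b K (n + 1) M

variable {R : Type} [Ring R]

theorem Syz.mono {b : Prop} {K M : ModuleCat.{0} R} {n : ℕ} (h : Syz R b K n M) :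
    Syz R False K n M := by
  induction h with
  | zero e => exact .zero e
  | succ i p hP hi hp hex hb h ih => exact .succ i p hP hi hp hex (fun h => h.elim) ih

theorem Syz.congr_right {b : Prop} {K M N : ModuleCat.{0} R} {n : ℕ} (h : Syz R b K n M)
    (e : (M : Type) ≃ₗ[R] N) : Syz R b K n N := by
  cases h with
  | zero e' => exact .zero (e'.trans e)
  | succ i p hP hi hp hex hb h =>
    refine .succ i (e.toLinearMap ∘ₗ p) hP hi (e.surjective.comp hp) ?_ ?_ h
    · intro x
      rw [← hex x]; simp
    · intro hh
      rw [LinearEquiv.ker_comp]; exact hb hh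

theorem Syz.congr_left {b : Prop} {K M N : ModuleCat.{0} R} {n : ℕ} (h : Syz R b K n M)
    (e : (K : Type) ≃ₗ[R] N) : Syz R b N n M := by
  induction h with
  | zero e' => exact .zero (e.symm.trans e')
  | succ i p hP hi hp hex hb h ih => exact .succ i p hP hi hp hex hb ih

theorem Syz.trans {b : Prop} {K M N : ModuleCat.{0} R} {n m : ℕ} (h : Syz R b K n M)
    (h' : Syz R b M m N) : Syz R b K (n + m) N := by
  induction h' with
  | zero e' => exact h.congr_right e'
  | succ i p hP hi hp hex hb h ih => exact .succ i p hP hi hp hex hb ih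

theorem Syz.mul {b : Prop} {K : ModuleCat.{0} R} {n : ℕ} (h : Syz R b K n K) (m : ℕ) :
    Syz R b K (n * m) K := by
  induction m with
  | zero => exact .zero (.refl _ _)
  | succ m ih => rw [Nat.mul_succ]; exact ih.trans h

/-- add a projective summand -/
theorem Syz.add_proj {K M : ModuleCat.{0} R} {n : ℕ} (h : Syz R False K (n + 1) M)
    (Z : ModuleCat.{0} R) (hZ : Module.Projective R Z) :
    Syz R False (ModuleCat.of R (K × Z)) (n + 1) M := by
  induction n generalizing M with
  | zero =>
    cases h with
    | @succ n M P Y i p hP hi hp hex hb h =>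
    cases h with
    | zero e =>
    refine Syz.succ (P := ModuleCat.of R (P × Z)) (Y := ModuleCat.of R (K × Z))
      (LinearMap.prodMap (i ∘ₗ e.toLinearMap) LinearMap.id) (p ∘ₗ LinearMap.fst R P Z)
      ?_ ?_ ?_ ?_ (fun h => h.elim) (.zero (.refl _ _))
    · exact inferInstanceAs (Module.Projective R (P × Z))
    · rintro ⟨a, b⟩ ⟨c, d⟩ hh
      simp only [LinearMap.prodMap_apply, Prod.mk.injEq, LinearMap.comp_apply] at hh
      obtain ⟨h1, h2⟩ := hh
      have := e.injective (hi h1)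
      rw [this]; congr
    · intro x
      obtain ⟨y, rfl⟩ := hp x
      exact ⟨(y, 0), rfl⟩
    · rintro ⟨a, c⟩
      change p a = 0 ↔ _
      rw [hex a]
      constructor
      · rintro ⟨y, rfl⟩
        exact ⟨(e.symm y, c), by simp⟩
      · rintro ⟨⟨y, c'⟩, hh⟩
        exact ⟨e y, congrArg Prod.fst hh⟩
  | succ n ih =>
    cases h with
    | succ i p hP hi hp hex hb h => exact .succ i p hP hi hp hex hb (ih h)

theorem HasProjExactSeq.syz {K : ModuleCat.{0} R} {n : ℕ} : ∀ {M : ModuleCat.{0} R},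
    HasProjExactSeq R K M n → Syz R False K n M := by
  induction n with
  | zero =>
    rintro M ⟨P, d, e, e', -, h1, h2, -⟩
    exact .zero (e' ≪≫ₗ LinearEquiv.ofBijective (d 0) ⟨h2, h1⟩ ≪≫ₗ e)
  | succ n ih =>
    rintro M ⟨P, d, e, e', hP, h1, h2, h3⟩
    have key : HasProjExactSeq R K (ModuleCat.of R (LinearMap.ker (d 0))) n := by
      refine ⟨fun i => match i with
        | 0 => ModuleCat.of R (LinearMap.ker (d 0))
        | i + 1 => P (i + 2), fun i => match i with
        | 0 => (d 1).codRestrict (LinearMap.ker (d 0)) (fun c => by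
            rw [← h3 0 (by omega)]; exact ⟨c, rfl⟩)
        | i + 1 => d (i + 2), .refl _ _, e', ?_, ?_, ?_, ?_⟩
      · intro i hi hi'
        obtain ⟨j, rfl⟩ : ∃ j, i = j + 1 := ⟨i - 1, by omega⟩
        exact hP _ (by omega) (by omega)
      · rintro ⟨x, hx⟩
        rw [← h3 0 (by omega)] at hx
        obtain ⟨y, rfl⟩ := hx
        exact ⟨y, rfl⟩
      · cases n with
        | zero =>
          intro x y hxy
          exact h2 (congrArg Subtype.val hxy)
        | succ n => exact h2
      · intro i hi
        cases i with
        | zero =>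
          refine (h3 1 (by omega)).trans ?_
          ext x
          simp
        | succ i => exact h3 (i + 2) (by omega)
    refine Syz.succ (P := P 1) (LinearMap.ker (d 0)).subtype (e.toLinearMap ∘ₗ d 0)
      (hP 1 le_rfl (by omega)) Subtype.val_injective (e.surjective.comp h1) ?_ (fun h => h.elim)
      (ih key)
    intro x
    simp

theorem Syz.hasProjExactSeq {K : ModuleCat.{0} R} {n : ℕ} {M : ModuleCat.{0} R}
    (h : Syz R False K n M) : HasProjExactSeq R K M n := by
  induction h with
  | @zero M e =>
    refine ⟨fun i => match i with
        | 0 => M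
        | i + 1 => K, fun i => match i with
        | 0 => e.toLinearMap
        | i + 1 => 0, .refl _ _, .refl _ _, ?_, e.surjective, e.injective, ?_⟩
    · intro i h1 h2; omega
    · intro i h1; omega
  | @succ n M Q Y i p hQ hi hp hex hb h ih =>
    obtain ⟨P, d, e, e', hP, h1, h2, h3⟩ := ih
    refine ⟨fun i => match i with
        | 0 => M
        | 1 => Q
        | i + 2 => P (i + 1), fun j => match j with
        | 0 => p
        | 1 => i ∘ₗ e.toLinearMap ∘ₗ d 0
        | j + 2 => d (j + 1), .refl _ _, e', ?_, hp, ?_, ?_⟩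
    · intro j h1 h2
      match j, h1 with
      | 1, _ => exact hQ
      | j + 2, _ => exact hP _ (by omega) (by omega)
    · cases n with
      | zero => exact hi.comp (e.injective.comp h2)
      | succ n => exact h2
    · intro j hj
      match j, hj with
      | 0, _ =>
        ext x
        refine Iff.trans ?_ (hex x).symm
        constructor
        · rintro ⟨y, rfl⟩; exact ⟨_, rfl⟩
        · rintro ⟨y, rfl⟩
          obtain ⟨z, hz⟩ := h1 (e.symm y)
          exact ⟨z, by simp [hz]⟩
      | 1, hj =>
        refine (h3 0 (by omega)).trans ?_
        ext x
        simp only [LinearMap.mem_ker, LinearMap.comp_apply]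
        rw [map_eq_zero_iff i hi]
        simp
      | j + 2, hj => exact h3 (j + 1) (by omega)

theorem hasProjExactSeq_iff {K : ModuleCat.{0} R} {n : ℕ} {M : ModuleCat.{0} R} :
    HasProjExactSeq R K M n ↔ Syz R False K n M := ⟨HasProjExactSeq.syz, Syz.hasProjExactSeq⟩

end General

section General2

variable {R : Type} [Ring R]

theorem nak [IsArtinianRing R] {M : Type} [AddCommGroup M] [Module R M] (N : Submodule R M)
    (h : N ⊔ Ring.jacobson R • (⊤ : Submodule R M) = ⊤) : N = ⊤ := by
  obtain ⟨k, hk⟩ := IsSemiprimaryRing.isNilpotent (R := R)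
  have key : ∀ n : ℕ, N ⊔ (Ring.jacobson R) ^ n • (⊤ : Submodule R M) = ⊤ := by
    intro n
    induction n with
    | zero => rw [Submodule.pow_zero, Ideal.one_eq_top, Submodule.top_smul, sup_top_eq]
    | succ n ih =>
      rw [eq_top_iff]
      conv_lhs => rw [← ih]
      refine sup_le le_sup_left ?_
      conv_lhs => rw [← h]
      rw [Submodule.smul_sup, ← Submodule.mul_smul, ← Submodule.pow_succ]
      exact sup_le_sup_right Submodule.smul_le_right _
  have := key k
  rw [hk] at this
  simpa using this

theorem nak_surj [IsArtinianRing R] {M P : Type} [AddCommGroup M] [Module R M]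
    [AddCommGroup P] [Module R P] (f : P →ₗ[R] M)
    (h : LinearMap.range f ⊔ Ring.jacobson R • (⊤ : Submodule R M) = ⊤) :
    Function.Surjective f := LinearMap.range_eq_top.1 (nak _ h)

theorem nak_bot [IsArtinianRing R] {M : Type} [AddCommGroup M] [Module R M] 
    (h : Ring.jacobson R • (⊤ : Submodule R M) = ⊤) : (⊤ : Submodule R M) = ⊥ :=
  (nak ⊥ (by rw [h]; simp)).symm

/-- If `p : P → M` is a cover and `f : Q → P` is such that `p ∘ f` is onto then `f` is onto. -/
theorem cover_surj [IsArtinianRing R] {M P Q : Type} [AddCommGroup M] [Module R M]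
    [AddCommGroup P] [Module R P] [AddCommGroup Q] [Module R Q] (f : Q →ₗ[R] P)
    (p : P →ₗ[R] M) (hp : LinearMap.ker p ≤ Ring.jacobson R • (⊤ : Submodule R P))
    (h : Function.Surjective (p ∘ₗ f)) : Function.Surjective f := by
  apply nak_surj
  rw [eq_top_iff]
  intro x _
  obtain ⟨y, hy⟩ := h (p x)
  have : x = f y + (x - f y) := by abel
  rw [this]
  refine Submodule.add_mem_sup ⟨y, rfl⟩ (hp ?_)
  simpa [sub_eq_zero] using hy.symm

theorem kernel_compare [IsArtinianRing R] {M P Q L K : Type} [AddCommGroup M] [Module R M]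
    [AddCommGroup P] [Module R P] [AddCommGroup Q] [Module R Q] [AddCommGroup L] [Module R L]
    [AddCommGroup K] [Module R K]
    [Module.Projective R P] [Module.Projective R Q]
    (i : L →ₗ[R] P) (p : P →ₗ[R] M) (hi : Function.Injective i) (hp : Function.Surjective p)
    (hex : Function.Exact i p)
    (hb : LinearMap.ker p ≤ Ring.jacobson R • (⊤ : Submodule R P))
    (j : K →ₗ[R] Q) (q : Q →ₗ[R] M) (hj : Function.Injective j) (hq : Function.Surjective q)
    (hex' : Function.Exact j q) :
    ∃ Z : ModuleCat.{0} R, Module.Projective R Z ∧ Nonempty (K ≃ₗ[R] (L × Z)) := by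
  obtain ⟨f, hf⟩ := Module.projective_lifting_property p q hp
  have hfs : Function.Surjective f := cover_surj f p hb (by rw [hf]; exact hq)
  obtain ⟨s, hs⟩ := Module.projective_lifting_property f LinearMap.id hfs
  have hs' : ∀ x, f (s x) = x := fun x => LinearMap.congr_fun hs x
  have hf' : ∀ x, p (f x) = q x := fun x => LinearMap.congr_fun hf x
  have hpi : ∀ x, p (i x) = 0 := fun x => (hex _).2 ⟨x, rfl⟩
  have hqj : ∀ x, q (j x) = 0 := fun x => (hex' _).2 ⟨x, rfl⟩
  -- the splitting
  have hZ : Module.Projective R (LinearMap.ker f) := by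
    refine Module.Projective.of_split (LinearMap.ker f).subtype
      ((LinearMap.id - s ∘ₗ f).codRestrict (LinearMap.ker f) (fun c => by simp [hs'])) ?_
    ext x
    simp
  refine ⟨ModuleCat.of R (LinearMap.ker f), hZ, ⟨LinearEquiv.symm ?_⟩⟩
  let eK : K ≃ₗ[R] LinearMap.ker q := LinearEquiv.ofInjective j hj ≪≫ₗ
    LinearEquiv.ofEq _ _ (by ext x; exact (hex' x).symm)
  let g : (L × LinearMap.ker f) →ₗ[R] LinearMap.ker q :=
    LinearMap.coprod ((s ∘ₗ i).codRestrict (LinearMap.ker q) (fun x => by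
        simp [← hf', hs', hpi]))
      (Submodule.inclusion (fun x hx => by
        rw [LinearMap.mem_ker] at hx ⊢; rw [← hf', hx, map_zero]))
  have hg : ∀ x, (g x : Q) = s (i x.1) + x.2 := fun x => by simp [g]
  refine LinearEquiv.ofBijective g ⟨?_, ?_⟩ ≪≫ₗ eK.symm
  · rw [injective_iff_map_eq_zero]
    rintro ⟨a, c⟩ h
    have h1 : s (i a) + (c : Q) = 0 := by rw [← hg (a, c), h]; rfl
    have h2 : i a = 0 := by
      have := congrArg f h1
      rw [map_add, hs', show f (c : Q) = 0 from c.2] at this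
      simpa using this
    have h3 : a = 0 := hi (by simpa using h2)
    subst h3
    simp only [map_zero, zero_add] at h1
    ext <;> simp [h1]
  · rintro ⟨x, hx⟩
    obtain ⟨a, ha⟩ := (hex (f x)).1 (by rw [hf']; exact hx)
    refine ⟨(a, ⟨x - s (f x), by simp [hs']⟩), ?_⟩
    ext
    rw [hg]
    simp [ha]

theorem Syz.compare [IsArtinianRing R] {K L : ModuleCat.{0} R} {n : ℕ} {M M₀ : ModuleCat.{0} R}
    (h : Syz R False K n M) (h' : Syz R True L n M₀) (Q₀ : ModuleCat.{0} R)
    (hQ : Module.Projective R Q₀) (e : (M : Type) ≃ₗ[R] (M₀ × Q₀)) :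
    ∃ Z : ModuleCat.{0} R, Module.Projective R Z ∧ Nonempty (K ≃ₗ[R] (L × Z)) := by
  induction n generalizing M M₀ Q₀ with
  | zero =>
    cases h with
    | zero e1 =>
    cases h' with
    | zero e2 =>
    exact ⟨Q₀, hQ, ⟨e1 ≪≫ₗ e ≪≫ₗ LinearEquiv.prodCongr e2.symm (.refl _ _)⟩⟩
  | succ n ih =>
    cases h with
    | @succ _ _ Q Y j q hQ' hj hq hex' _ h =>
    cases h' with
    | @succ _ _ P L₁ i p hP hi hp hex hb h' =>
    obtain ⟨Z, hZ, ⟨e'⟩⟩ := kernel_compare (L := L₁) (P := P × Q₀)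
      (LinearMap.inl R P Q₀ ∘ₗ i) (e.symm.toLinearMap ∘ₗ LinearMap.prodMap p LinearMap.id)
      (LinearMap.inl_injective.comp hi)
      (e.symm.surjective.comp (Function.Surjective.prodMap hp Function.surjective_id))
      (by
        rintro ⟨a, c⟩
        have : (e.symm (p a, c) = 0) ↔ p a = 0 ∧ c = 0 := by
          rw [LinearEquiv.map_eq_zero_iff, Prod.mk_eq_zero]
        refine this.trans ?_
        rw [hex a]
        constructor
        · rintro ⟨⟨y, rfl⟩, rfl⟩; exact ⟨y, rfl⟩
        · rintro ⟨y, hy⟩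
          exact ⟨⟨y, congrArg Prod.fst hy⟩, (congrArg Prod.snd hy).symm⟩)
      (by
        rintro ⟨a, c⟩ hac
        rw [LinearMap.mem_ker] at hac
        have : (e.symm (p a, c) = 0) := hac
        rw [LinearEquiv.map_eq_zero_iff, Prod.mk_eq_zero] at this
        obtain ⟨h1, rfl⟩ := this
        have h2 := hb trivial h1
        have h3 : LinearMap.inl R P Q₀ a ∈
          (Ring.jacobson R • (⊤ : Submodule R P)).map (LinearMap.inl R P Q₀) := ⟨a, h2, rfl⟩
        rw [Submodule.map_smul''] at h3
        exact Submodule.smul_mono le_rfl le_top h3) j q hj hq hex'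
    exact ih h h' Z hZ e'

theorem Syz.compare' [IsArtinianRing R] {K L : ModuleCat.{0} R} {n : ℕ} {M : ModuleCat.{0} R}
    (h : Syz R False K n M) (h' : Syz R True L n M) :
    ∃ Z : ModuleCat.{0} R, Module.Projective R Z ∧ Nonempty (K ≃ₗ[R] (L × Z)) := by
  refine h.compare h' (ModuleCat.of R PUnit) ?_ ?_
  · exact inferInstanceAs (Module.Projective R PUnit)
  · exact (LinearEquiv.prodUnique (R := R) (M := M) (M₂ := PUnit)).symm

theorem exists_cover [IsArtinianRing R] (M : Type) [AddCommGroup M] [Module R M]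
    [Module.Finite R M] : ∃ (P : ModuleCat.{0} R) (p : P →ₗ[R] M), Module.Projective R P ∧
      Module.Finite R P ∧ Function.Surjective p ∧
      LinearMap.ker p ≤ Ring.jacobson R • (⊤ : Submodule R P) := by
  obtain ⟨n, π, hπ⟩ := Module.Finite.exists_fin' R M
  set P := Fin n → R with hPdef
  set JP := Ring.jacobson R • (⊤ : Submodule R P) with hJP
  have hss : IsSemisimpleModule R (P ⧸ JP) := by
    have hh : Module.IsTorsionBySet R (P ⧸ JP) (Ring.jacobson R) := by
      rw [Module.isTorsionBySet_quotient_iff]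
      exact fun m i hi ↦ Submodule.smul_mem_smul hi trivial
    let _ := hh.module
    exact (Module.IsTorsionBySet.isSemisimpleModule_iff hh).1 inferInstance
  set Kb := (LinearMap.ker π).map JP.mkQ with hKb
  obtain ⟨C, hC⟩ := exists_isCompl Kb
  let ebar : (P ⧸ JP) →ₗ[R] (P ⧸ JP) := C.projection Kb hC.symm
  have hker : ∀ x ∈ Kb, ebar x = 0 := fun x hx =>
    (Submodule.projection_apply_eq_zero_iff hC.symm).2 hx
  have hid : ∀ x, ebar (ebar x) = ebar x := fun x =>
    (Submodule.projection_eq_self_iff hC.symm _).2 (Submodule.projection_apply_mem hC.symm x)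
  have hsub : ∀ x, x - ebar x ∈ Kb := fun x => by
    rw [← Submodule.projection_apply_eq_zero_iff hC.symm, map_sub]
    exact sub_eq_zero.2 (hid x).symm
  obtain ⟨e, he⟩ := Module.projective_lifting_property JP.mkQ (ebar ∘ₗ JP.mkQ) JP.mkQ_surjective
  have he' : ∀ x, JP.mkQ (e x) = ebar (JP.mkQ x) := fun x => LinearMap.congr_fun he x
  obtain ⟨m, hm⟩ := Filter.eventually_atTop.1 (LinearMap.eventually_isCompl_ker_pow_range_pow e)
  have hm := hm (m + 1) (by omega)
  have hpow : ∀ m x, JP.mkQ ((e ^ (m + 1)) x) = ebar (JP.mkQ x) := by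
    intro m x
    induction m with
    | zero => simpa using he' x
    | succ m ih => rw [pow_succ', Module.End.mul_apply, he', ih, hid]
  set f := e ^ (m + 1) with hf
  have hfJ : ∀ x, x - f x ∈ LinearMap.ker π ⊔ JP := by
    intro x
    obtain ⟨y, hy, hy'⟩ := hsub (JP.mkQ x)
    have h2 : JP.mkQ (x - f x - y) = 0 := by
      rw [map_sub, map_sub, hf, hpow, hy', sub_self]
    rw [Submodule.mkQ_apply, Submodule.Quotient.mk_eq_zero] at h2
    have := Submodule.add_mem_sup hy h2
    rwa [add_sub_cancel] at this
  let r : P →ₗ[R] LinearMap.range f := Submodule.projectionOnto _ _ hm.symm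
  have hr : r ∘ₗ (LinearMap.range f).subtype = .id := by
    ext x
    simp [r]
  refine ⟨ModuleCat.of R (LinearMap.range f), π ∘ₗ (LinearMap.range f).subtype,
    Module.Projective.of_split _ r hr, ?_, ?_, ?_⟩
  · exact inferInstanceAs (Module.Finite R (LinearMap.range f))
  · apply nak_surj
    rw [eq_top_iff]
    rintro x -
    obtain ⟨y, rfl⟩ := hπ x
    have h1 : π y = π (f y) + π (y - f y) := by rw [map_sub]; abel
    rw [h1]
    refine Submodule.add_mem_sup ⟨⟨f y, y, rfl⟩, rfl⟩ ?_
    have h2 := Submodule.mem_map_of_mem (f := π) (hfJ y)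
    rw [Submodule.map_sup, hJP, Submodule.map_smul''] at h2
    refine Set.mem_of_subset_of_mem (SetLike.coe_subset_coe.2 (sup_le ?_ ?_)) h2
    · rintro _ ⟨z, hz, rfl⟩
      rw [show π z = 0 from hz]; exact Submodule.zero_mem _
    · exact Submodule.smul_mono le_rfl le_top
  · rintro ⟨x, y, rfl⟩ hx
    have hx' : π (f y) = 0 := hx
    have h1 : ebar (JP.mkQ (f y)) = 0 := hker _ ⟨f y, hx', rfl⟩
    rw [hf, hpow, hid, ← hpow m] at h1
    have h2 : f y ∈ JP := by
      rwa [Submodule.mkQ_apply, Submodule.Quotient.mk_eq_zero] at h1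
    have h3 := Submodule.mem_map_of_mem (f := r) h2
    rw [hJP, Submodule.map_smul''] at h3
    have h4 : r (f y) = ⟨f y, y, rfl⟩ := LinearMap.congr_fun hr ⟨f y, y, rfl⟩
    rw [h4] at h3
    exact Submodule.smul_mono le_rfl le_top h3

theorem exists_minSyz [IsArtinianRing R] (n : ℕ) (M : ModuleCat.{0} R) [Module.Finite R M] :
    ∃ K : ModuleCat.{0} R, Module.Finite R K ∧ Syz R True K n M := by
  induction n generalizing M with
  | zero => exact ⟨M, ‹_›, .zero (.refl _ _)⟩
  | succ n ih =>
    obtain ⟨P, p, h1, h2, h3, h4⟩ := exists_cover (R := R) M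
    have : Module.Finite R (ModuleCat.of R (LinearMap.ker p)) :=
      inferInstanceAs (Module.Finite R (LinearMap.ker p))
    obtain ⟨K, hK, hs⟩ := ih (ModuleCat.of R (LinearMap.ker p))
    exact ⟨K, hK, .succ (LinearMap.ker p).subtype p h1 Subtype.val_injective h3
      (fun x => by simp) (fun _ => h4) hs⟩

end General2

section General3

variable {R : Type} [Ring R]

theorem finite_simples_aux (N : Type) [AddCommGroup N] [Module R N] (h : IsFiniteLength R N) :
    ∃ (ι : Type) (_ : Finite ι) (S : ι → ModuleCat.{0} R), ∀ (M : Type) [AddCommGroup M]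
      [Module R M], IsSimpleModule R M → ∀ f : N →ₗ[R] M, f ≠ 0 →
        ∃ i, Nonempty (M ≃ₗ[R] S i) := by
  induction h with
  | of_subsingleton =>
    refine ⟨Empty, inferInstance, fun i => i.elim, fun M _ _ _ f hf => (hf ?_).elim⟩
    ext x
    rw [Subsingleton.elim x 0]; simp
  | @of_simple_quotient N _ _ N' hs hN' ih =>
    obtain ⟨ι, _, S, hS⟩ := ih
    refine ⟨Option ι, inferInstance, fun i => i.elim (ModuleCat.of R (N ⧸ N')) S,
      fun M _ _ hM f hf => ?_⟩
    by_cases h : f ∘ₗ N'.subtype = 0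
    · refine ⟨none, ⟨LinearEquiv.symm ?_⟩⟩
      have hle : N' ≤ LinearMap.ker f := fun x hx => LinearMap.congr_fun h ⟨x, hx⟩
      refine LinearEquiv.ofBijective (N'.liftQ f hle) (LinearMap.bijective_of_ne_zero ?_)
      intro h0
      apply hf
      rw [← N'.liftQ_mkQ f hle, h0, LinearMap.zero_comp]
    · obtain ⟨i, hi⟩ := hS M hM _ h
      exact ⟨some i, hi⟩

theorem finite_simples (R : Type) [Ring R] [IsArtinianRing R] :
    ∃ (ι : Type) (_ : Finite ι) (S : ι → ModuleCat.{0} R), ∀ (M : Type) [AddCommGroup M]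
      [Module R M], IsSimpleModule R M → ∃ i, Nonempty (M ≃ₗ[R] S i) := by
  obtain ⟨ι, h, S, hS⟩ := finite_simples_aux (R := R) R
    (isFiniteLength_iff_isNoetherian_isArtinian.2 ⟨inferInstance, inferInstance⟩)
  refine ⟨ι, h, S, fun M _ _ hM => ?_⟩
  have := IsSimpleModule.nontrivial R M
  obtain ⟨m, hm⟩ := exists_ne (0 : M)
  refine hS M hM (LinearMap.toSpanSingleton R M m) (fun h0 => hm ?_)
  simpa using LinearMap.congr_fun h0 1

theorem common_period [IsArtinianRing R] (h : ∀ (M : Type) [AddCommGroup M] [Module R M],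
    IsSimpleModule R M → ∃ m : ℕ, 1 ≤ m ∧ Syz R False (.of R M) m (.of R M)) :
    ∃ n : ℕ, ∀ (M : Type) [AddCommGroup M] [Module R M],
    IsSimpleModule R M → Syz R False (.of R M) (n + 1) (.of R M) := by
  obtain ⟨ι, _, S, hS⟩ := finite_simples R
  have : Fintype ι := Fintype.ofFinite ι
  have h1 : ∀ i, ∃ m : ℕ, 1 ≤ m ∧ ∀ (M : Type) [AddCommGroup M] [Module R M],
    IsSimpleModule R M → Nonempty (M ≃ₗ[R] S i) → Syz R False (.of R M) m (.of R M) := by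
    intro i
    by_cases hi : IsSimpleModule R (S i)
    · obtain ⟨m, hm, hm'⟩ := h _ hi
      refine ⟨m, hm, fun M _ _ _ ⟨e⟩ => ?_⟩
      exact (hm'.congr_left (N := .of R M) e.symm).congr_right (N := .of R M) e.symm
    · refine ⟨1, le_rfl, fun M _ _ hM ⟨e⟩ => (hi ?_).elim⟩
      exact IsSimpleModule.congr e.symm
  choose m hm hm' using h1
  have hpos : 1 ≤ ∏ i, m i := Nat.succ_le_of_lt (Finset.prod_pos fun i _ => hm i)
  refine ⟨∏ i, m i - 1, fun M _ _ hM => ?_⟩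
  rw [Nat.sub_add_cancel hpos]
  obtain ⟨i, hi⟩ := hS M hM
  obtain ⟨c, hc⟩ := Finset.dvd_prod_of_mem m (Finset.mem_univ i)
  rw [hc]
  exact (hm' i M hM hi).mul c

end General3

theorem proj_trans_aux (S T P : Type) [Ring S] [Ring T] [AddCommGroup P] [Module S T] [Module S P]
    [Module T P] [IsScalarTower S T T] [IsScalarTower S T P] [Module.Projective S T]
    [Module.Projective T P] : Module.Projective S P := by
  classical
  obtain ⟨s, hs⟩ := Module.projective_def'.1 (inferInstance : Module.Projective T P)
  have : Module.Projective S (P →₀ T) := .of_equiv' (finsuppLequivDFinsupp S).symm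
  refine Module.Projective.of_split (s.restrictScalars S)
    ((Finsupp.linearCombination T id).restrictScalars S) ?_
  ext x
  exact LinearMap.congr_fun hs x

theorem proj_compHom {S T : Type} [Ring S] [Ring T] (f : S →+* T) (T' : Type) [AddCommGroup T']
    [Module S T'] [Module.Projective S T'] (e : T' ≃+ T) (he : ∀ s x, e (s • x) = f s * e x)
    (P : Type) [AddCommGroup P] [Module T P]
    [Module.Projective T P] : @Module.Projective S _ P _ (Module.compHom P f) := by
  let _ := Module.compHom T f
  let _ := Module.compHom P f
  have : IsScalarTower S T P := ⟨fun a b c => mul_smul (f a) b c⟩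
  have : IsScalarTower S T T := ⟨fun a b c => mul_smul (f a) b c⟩
  have : Module.Projective S T :=
    .of_equiv' (P := T) ({ e with map_smul' := fun s x => he s x } : T' ≃ₗ[S] T)
  exact proj_trans_aux S T P

section Bimod

variable (k B : Type) [Field k] [Ring B] [Algebra k B]

/-- enveloping algebra -/
abbrev Env : Type := B ⊗[k] Bᵐᵒᵖ

/-- underlying right module -/
def Rt (_k _B P : Type) : Type := P

/-- underlying left module -/
def Lt (_k _B P : Type) : Type := P

variable (P : Type) [AddCommGroup P] [Module (Env k B) P]

instance : AddCommGroup (Rt k B P) := inferInstanceAs (AddCommGroup P)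
instance : AddCommGroup (Lt k B P) := inferInstanceAs (AddCommGroup P)

noncomputable instance : Module Bᵐᵒᵖ (Rt k B P) :=
  Module.compHom P (Algebra.TensorProduct.includeRight : Bᵐᵒᵖ →ₐ[k] Env k B).toRingHom

noncomputable instance : Module B (Lt k B P) :=
  Module.compHom P (Algebra.TensorProduct.includeLeft : B →ₐ[k] Env k B).toRingHom

variable {P} in
/-- the tautological map -/
def Rt.of : P ≃+ Rt k B P := AddEquiv.refl P

variable {P} in
/-- the tautological map -/
def Lt.of : P ≃+ Lt k B P := AddEquiv.refl P

variable {P} in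
theorem Rt.smul_of (c : Bᵐᵒᵖ) (x : P) :
    c • Rt.of k B x = Rt.of k B ((1 ⊗ₜ c : Env k B) • x) := rfl

variable {P} in
theorem Lt.smul_of (c : B) (x : P) :
    c • Lt.of k B x = Lt.of k B ((c ⊗ₜ 1 : Env k B) • x) := rfl

variable {k B} in
theorem LR (b : B) (c : Bᵐᵒᵖ) (x : P) :
    (b ⊗ₜ 1 : Env k B) • (1 ⊗ₜ c : Env k B) • x = (b ⊗ₜ c : Env k B) • x := by
  rw [← mul_smul]; simp

variable {k B} in
theorem RL (b : B) (c : Bᵐᵒᵖ) (x : P) :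
    (1 ⊗ₜ c : Env k B) • (b ⊗ₜ 1 : Env k B) • x = (b ⊗ₜ c : Env k B) • x := by
  rw [← mul_smul]; simp

theorem Lt.proj [Module.Projective (Env k B) P] : Module.Projective B (Lt k B P) := by
  refine proj_compHom (Algebra.TensorProduct.includeLeft : B →ₐ[k] Env k B).toRingHom
    (B ⊗[k] Bᵐᵒᵖ) (AddEquiv.refl _) ?_ P
  intro b x
  change b • x = (b ⊗ₜ 1 : Env k B) * x
  induction x with
  | zero => simp
  | add x y hx hy => rw [smul_add, hx, hy, mul_add]
  | tmul x y => simp [smul_tmul']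

theorem Rt.proj [Module.Projective (Env k B) P] : Module.Projective Bᵐᵒᵖ (Rt k B P) := by
  refine proj_compHom (Algebra.TensorProduct.includeRight : Bᵐᵒᵖ →ₐ[k] Env k B).toRingHom
    (Bᵐᵒᵖ ⊗[k] B) (Algebra.TensorProduct.comm k Bᵐᵒᵖ B).toAddEquiv ?_ P
  intro b x
  change (Algebra.TensorProduct.comm k Bᵐᵒᵖ B) (b • x) =
    (1 ⊗ₜ b : Env k B) * (Algebra.TensorProduct.comm k Bᵐᵒᵖ B) x
  induction x with
  | zero => simp
  | add x y hx hy => rw [smul_add, map_add, hx, hy, map_add, mul_add]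
  | tmul x y => simp [smul_tmul']

variable {k B P}
variable {Q : Type} [AddCommGroup Q] [Module (Env k B) Q]

/-- restriction of linear maps -/
noncomputable def Rt.map (f : P →ₗ[Env k B] Q) : Rt k B P →ₗ[Bᵐᵒᵖ] Rt k B Q where
  toFun := f
  map_add' := f.map_add
  map_smul' _ x := f.map_smul _ x

/-- restriction of linear maps -/
noncomputable def Lt.map (f : P →ₗ[Env k B] Q) : Lt k B P →ₗ[B] Lt k B Q where
  toFun := f
  map_add' := f.map_add
  map_smul' _ x := f.map_smul _ x

theorem Rt.map_of (f : P →ₗ[Env k B] Q) (x : P) : Rt.map f (Rt.of k B x) = Rt.of k B (f x) := rfl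
theorem Lt.map_of (f : P →ₗ[Env k B] Q) (x : P) : Lt.map f (Lt.of k B x) = Lt.of k B (f x) := rfl

variable (k) in
/-- the submodule `I P` -/
noncomputable def IP (I : Submodule Bᵐᵒᵖ B) (P : Type) [AddCommGroup P] [Module (Env k B) P] :
    Submodule Bᵐᵒᵖ (Rt k B P) :=
  Submodule.span Bᵐᵒᵖ {x | ∃ b ∈ I, ∃ p : P, x = Rt.of k B ((b ⊗ₜ 1 : Env k B) • p)}

theorem mem_IP {I : Submodule Bᵐᵒᵖ B} {b : B} (hb : b ∈ I) (p : P) :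
    Rt.of k B ((b ⊗ₜ 1 : Env k B) • p) ∈ IP k I P :=
  Submodule.subset_span ⟨b, hb, p, rfl⟩

theorem IP_induction {I : Submodule Bᵐᵒᵖ B} {C : P → Prop} (h0 : C 0)
    (hadd : ∀ x y, C x → C y → C (x + y)) (h : ∀ b ∈ I, ∀ p : P, C ((b ⊗ₜ 1 : Env k B) • p : P))
    {x : P} (hx : Rt.of k B x ∈ IP k I P) : C x := by
  suffices ∀ y : Rt k B P, y ∈ IP k I P → ∀ c : Bᵐᵒᵖ, C ((Rt.of k B).symm (c • y)) by
    simpa using this _ hx 1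
  clear hx x
  intro x hx
  unfold IP at hx
  induction hx using Submodule.span_induction with
  | mem x hx =>
    obtain ⟨b, hb, p, rfl⟩ := hx
    intro c
    rw [Rt.smul_of, RL, ← LR, AddEquiv.symm_apply_apply]
    exact h b hb _
  | zero => intro c; rw [smul_zero, map_zero]; exact h0
  | add x y _ _ hx hy => intro c; rw [smul_add, map_add]; exact hadd _ _ (hx c) (hy c)
  | smul a x _ hx => intro c; rw [← mul_smul]; exact hx _

theorem IP_map_lt {I : Submodule Bᵐᵒᵖ B} (f : Lt k B P →ₗ[B] Lt k B Q) {x : P}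
    (hx : Rt.of k B x ∈ IP k I P) :
    Rt.of k B ((Lt.of k B).symm (f (Lt.of k B x))) ∈ IP k I Q := by
  refine IP_induction (C := fun x => Rt.of k B ((Lt.of k B).symm (f (Lt.of k B x))) ∈ IP k I Q)
    ?_ ?_ ?_ hx
  · simp
  · intro x y hx hy
    simp only [map_add]
    exact Submodule.add_mem _ hx hy
  · intro b hb p
    rw [← Lt.smul_of, map_smul]
    exact mem_IP hb ((Lt.of k B).symm (f (Lt.of k B p)))

theorem IP_map {I : Submodule Bᵐᵒᵖ B} (f : P →ₗ[Env k B] Q) :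
    IP k I P ≤ (IP k I Q).comap (Rt.map f) := fun x hx =>
  IP_map_lt (x := (Rt.of k B).symm x) (Lt.map f) hx

variable (k) in
/-- The functor `B/I ⊗_B -`. -/
abbrev FF (I : Submodule Bᵐᵒᵖ B) (P : Type) [AddCommGroup P] [Module (Env k B) P] : Type :=
  Rt k B P ⧸ IP k I P

/-- the quotient map -/
noncomputable def FF.mk (I : Submodule Bᵐᵒᵖ B) : P →+ FF k I P :=
  (IP k I P).mkQ.toAddMonoidHom.comp (Rt.of k B).toAddMonoidHom

theorem FF.mk_surj (I : Submodule Bᵐᵒᵖ B) : Function.Surjective (FF.mk (k := k) (P := P) I) :=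
  (IP k I P).mkQ_surjective

theorem FF.mk_eq_zero {I : Submodule Bᵐᵒᵖ B} {p : P} :
    FF.mk (k := k) I p = 0 ↔ Rt.of k B p ∈ IP k I P := Submodule.Quotient.mk_eq_zero _

theorem FF.smul_mk (I : Submodule Bᵐᵒᵖ B) (c : Bᵐᵒᵖ) (p : P) :
    c • FF.mk (k := k) I p = FF.mk (k := k) I ((1 ⊗ₜ c : Env k B) • p) := rfl

theorem FF.mk_left {I : Submodule Bᵐᵒᵖ B} {b : B} (hb : b ∈ I) (c : Bᵐᵒᵖ) (p : P) :
    FF.mk (k := k) I ((b ⊗ₜ c : Env k B) • p) = 0 := by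
  rw [← LR]; exact FF.mk_eq_zero.2 (mem_IP hb _)

/-- universal property -/
noncomputable def FF.lift (I : Submodule Bᵐᵒᵖ B) {Z : Type} [AddCommGroup Z] [Module Bᵐᵒᵖ Z]
    (f : P →+ Z) (hs : ∀ (c : Bᵐᵒᵖ) p, f ((1 ⊗ₜ c : Env k B) • p) = c • f p)
    (hI : ∀ b ∈ I, ∀ p, f ((b ⊗ₜ 1 : Env k B) • p) = 0) : FF k I P →ₗ[Bᵐᵒᵖ] Z :=
  (IP k I P).liftQ (τ₁₂ := RingHom.id _) ({
    toFun := fun x => f ((Rt.of k B).symm x)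
    map_add' := fun x y => f.map_add x y
    map_smul' := fun c x => hs c ((Rt.of k B).symm x) }) (by
    intro x hx
    exact IP_induction (C := fun x => f x = 0) (map_zero f)
      (fun x y hx hy => by rw [map_add, hx, hy, add_zero]) hI (x := (Rt.of k B).symm x) hx)

theorem FF.lift_mk (I : Submodule Bᵐᵒᵖ B) {Z : Type} [AddCommGroup Z] [Module Bᵐᵒᵖ Z]
    (f : P →+ Z) (hs : ∀ (c : Bᵐᵒᵖ) p, f ((1 ⊗ₜ c : Env k B) • p) = c • f p)
    (hI : ∀ b ∈ I, ∀ p, f ((b ⊗ₜ 1 : Env k B) • p) = 0) (p : P) :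
    FF.lift I f hs hI (FF.mk I p) = f p := rfl

/-- functoriality -/
noncomputable def FF.map (I : Submodule Bᵐᵒᵖ B) (f : P →ₗ[Env k B] Q) :
    FF k I P →ₗ[Bᵐᵒᵖ] FF k I Q := (IP k I P).mapQ (IP k I Q) (Rt.map f) (IP_map f)

theorem FF.map_mk (I : Submodule Bᵐᵒᵖ B) (f : P →ₗ[Env k B] Q) (x : P) :
    FF.map I f (FF.mk I x) = FF.mk I (f x) := rfl

theorem FF.map_surj (I : Submodule Bᵐᵒᵖ B) (f : P →ₗ[Env k B] Q) (hf : Function.Surjective f) :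
    Function.Surjective (FF.map I f) := by
  intro y
  obtain ⟨y, rfl⟩ := FF.mk_surj _ y
  obtain ⟨x, rfl⟩ := hf y
  exact ⟨FF.mk I x, rfl⟩

theorem IP_surj {I : Submodule Bᵐᵒᵖ B} (p : P →ₗ[Env k B] Q) (hp : Function.Surjective p)
    {y : Q} (hy : FF.mk (k := k) I y = 0) : ∃ x : P, FF.mk (k := k) I x = 0 ∧ p x = y := by
  refine IP_induction (C := fun y => ∃ x : P, FF.mk (k := k) I x = 0 ∧ p x = y) ?_ ?_ ?_
    (FF.mk_eq_zero.1 hy)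
  · exact ⟨0, map_zero _, map_zero _⟩
  · rintro _ _ ⟨x, hx, rfl⟩ ⟨y, hy, rfl⟩
    exact ⟨x + y, by rw [map_add, hx, hy, add_zero], map_add _ _ _⟩
  · intro b hb q
    obtain ⟨x, rfl⟩ := hp q
    exact ⟨_, FF.mk_left hb 1 x, p.map_smul _ _⟩

variable {Y : Type} [AddCommGroup Y] [Module (Env k B) Y]

theorem FF.map_exact (I : Submodule Bᵐᵒᵖ B) (i : Y →ₗ[Env k B] P) (p : P →ₗ[Env k B] Q)
    (hp : Function.Surjective p) (hex : Function.Exact i p) :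
    Function.Exact (FF.map I i) (FF.map I p) := by
  intro x
  obtain ⟨x, rfl⟩ := FF.mk_surj _ x
  constructor
  · intro h
    rw [FF.map_mk] at h
    obtain ⟨z, hz, hz'⟩ := IP_surj p hp h
    have h3 : p (x - z) = 0 := by
      rw [map_sub]; exact sub_eq_zero.2 hz'.symm
    obtain ⟨y, hy⟩ := (hex _).1 h3
    refine ⟨FF.mk I y, ?_⟩
    rw [FF.map_mk, hy, map_sub, hz, sub_zero]
  · rintro ⟨y, hy⟩
    obtain ⟨y, rfl⟩ := FF.mk_surj _ y
    rw [← hy]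
    rw [FF.map_mk, FF.map_mk, (hex _).2 ⟨y, rfl⟩]
    exact map_zero _

theorem Lt.retract (i : Y →ₗ[Env k B] P) (p : P →ₗ[Env k B] Q) (hi : Function.Injective i)
    (hp : Function.Surjective p) (hex : Function.Exact i p)
    (hQ : Module.Projective B (Lt k B Q)) :
    ∃ r : Lt k B P →ₗ[B] Lt k B Y, r ∘ₗ Lt.map i = LinearMap.id := by
  obtain ⟨s, hs⟩ := Module.projective_lifting_property (Lt.map p) LinearMap.id hp
  have hex' : Function.Exact (Lt.map i) (Lt.map p) := hex
  have hi' : Function.Injective (Lt.map i) := hi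
  have h0 : Function.Injective (Lt.map i) ∧ ∃ l, (Lt.map p) ∘ₗ l = LinearMap.id := ⟨hi', s, hs⟩
  have h1 := ((Function.Exact.split_tfae' hex').out 0 1).1 h0
  obtain ⟨_, r, hr⟩ := h1
  exact ⟨r, hr⟩

theorem Rt.retract (i : Y →ₗ[Env k B] P) (p : P →ₗ[Env k B] Q) (hi : Function.Injective i)
    (hp : Function.Surjective p) (hex : Function.Exact i p)
    (hQ : Module.Projective Bᵐᵒᵖ (Rt k B Q)) :
    ∃ r : Rt k B P →ₗ[Bᵐᵒᵖ] Rt k B Y, r ∘ₗ Rt.map i = LinearMap.id := by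
  obtain ⟨s, hs⟩ := Module.projective_lifting_property (Rt.map p) LinearMap.id hp
  have hex' : Function.Exact (Rt.map i) (Rt.map p) := hex
  have hi' : Function.Injective (Rt.map i) := hi
  have h0 : Function.Injective (Rt.map i) ∧ ∃ l, (Rt.map p) ∘ₗ l = LinearMap.id := ⟨hi', s, hs⟩
  have h1 := ((Function.Exact.split_tfae' hex').out 0 1).1 h0
  obtain ⟨_, r, hr⟩ := h1
  exact ⟨r, hr⟩

theorem FF.map_inj (I : Submodule Bᵐᵒᵖ B) (i : Y →ₗ[Env k B] P)
    (r : Lt k B P →ₗ[B] Lt k B Y) (hr : r ∘ₗ Lt.map i = LinearMap.id) :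
    Function.Injective (FF.map I i) := by
  rw [injective_iff_map_eq_zero]
  intro x hx
  obtain ⟨x, rfl⟩ := FF.mk_surj _ x
  rw [FF.map_mk, FF.mk_eq_zero] at hx
  have := IP_map_lt r hx
  rw [← Lt.map_of, ← LinearMap.comp_apply, hr] at this
  exact FF.mk_eq_zero.2 this

end Bimod

section Bimod2

variable {k B : Type} [Field k] [Ring B] [Algebra k B]
variable {P : Type} [AddCommGroup P] [Module (Env k B) P]

theorem FF.proj_aux (I : Submodule Bᵐᵒᵖ B) {Z : Type} [AddCommGroup Z] [Module Bᵐᵒᵖ Z] [Module k Z]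
    [IsScalarTower k Bᵐᵒᵖ Z] (g : Z →ₗ[Bᵐᵒᵖ] FF k I P) (hg : Function.Surjective g) (p : P) :
    ∃ H : Env k B →+ Z, (∀ (c : Bᵐᵒᵖ) a, H ((1 ⊗ₜ c : Env k B) * a) = c • H a) ∧
      (∀ b ∈ I, ∀ a, H ((b ⊗ₜ 1 : Env k B) * a) = 0) ∧
      ∀ a, g (H a) = FF.mk (k := k) I (a • p) := by
  let _ : Module k (FF k I P) := Module.compHom _ (algebraMap k Bᵐᵒᵖ)
  have : IsScalarTower k Bᵐᵒᵖ (FF k I P) := ⟨fun a b c => by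
    change (a • b) • c = algebraMap k Bᵐᵒᵖ a • (b • c)
    rw [Algebra.smul_def, mul_smul]⟩
  let v : B →ₗ[k] FF k I P :=
    { toFun := fun b => FF.mk I ((b ⊗ₜ 1 : Env k B) • p)
      map_add' := fun a b => by rw [add_tmul, add_smul, map_add]
      map_smul' := fun a b => by
        change _ = algebraMap k Bᵐᵒᵖ a • FF.mk I ((b ⊗ₜ 1 : Env k B) • p)
        rw [FF.smul_mk, RL, smul_tmul, Algebra.algebraMap_eq_smul_one] }
  have : IsScalarTower k Bᵐᵒᵖ B := ⟨fun a b c => by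
    rw [MulOpposite.smul_eq_mul_unop, MulOpposite.smul_eq_mul_unop, MulOpposite.unop_smul,
      mul_smul_comm]⟩
  let I' : Submodule k B := I.restrictScalars k
  have hv : I' ≤ LinearMap.ker v := fun b hb => FF.mk_left (I := I) hb 1 p
  obtain ⟨w, hw⟩ := Module.projective_lifting_property (g.restrictScalars k) (I'.liftQ v hv) hg
  let u : B →ₗ[k] Z := w ∘ₗ I'.mkQ
  have hu : ∀ b, g (u b) = FF.mk I ((b ⊗ₜ 1 : Env k B) • p) := fun b =>
    LinearMap.congr_fun hw (I'.mkQ b)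
  have hu0 : ∀ b ∈ I, u b = 0 := fun b hb => by
    change w (I'.mkQ b) = 0
    rw [show I'.mkQ b = 0 from (Submodule.Quotient.mk_eq_zero _).2 hb, map_zero]
  have hkZ : ∀ (a : k) (c : Bᵐᵒᵖ) (z : Z), c • a • z = a • c • z := fun a c z => by
    rw [← algebraMap_smul Bᵐᵒᵖ a z, ← mul_smul, ← Algebra.commutes, mul_smul, algebraMap_smul]
  let H : Env k B →ₗ[k] Z := TensorProduct.lift (LinearMap.mk₂ k (fun (b : B) (c : Bᵐᵒᵖ) => c • u b)
    (fun _ _ _ => by rw [map_add, smul_add]) (fun _ _ _ => by rw [map_smul, hkZ])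
    (fun _ _ _ => by rw [add_smul]) (fun _ _ _ => by rw [smul_assoc]))
  have hH : ∀ b c, H (b ⊗ₜ c) = c • u b := fun b c => by simp [H]
  refine ⟨H.toAddMonoidHom, ?_, ?_, ?_⟩
  · intro c a
    change H _ = c • H a
    induction a using TensorProduct.induction_on with
    | zero => simp
    | add x y hx hy => rw [mul_add, map_add, hx, hy, map_add, smul_add]
    | tmul x y => rw [Algebra.TensorProduct.tmul_mul_tmul, hH, hH, one_mul, mul_smul]
  · intro b hb a
    change H _ = 0
    induction a using TensorProduct.induction_on with
    | zero => simp
    | add x y hx hy => rw [mul_add, map_add, hx, hy, add_zero]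
    | tmul x y =>
      rw [Algebra.TensorProduct.tmul_mul_tmul, hH, hu0, smul_zero]
      exact I.smul_mem (MulOpposite.op x) hb
  · intro a
    change g (H a) = _
    induction a using TensorProduct.induction_on with
    | zero =>
      have h0 : (0 : Env k B) • p = 0 := zero_smul (Env k B) p
      rw [map_zero, map_zero]
      exact ((congrArg (FF.mk (k := k) I) h0).trans (map_zero _)).symm
    | add x y hx hy => rw [map_add, map_add, hx, hy, add_smul, map_add]
    | tmul x y => rw [hH, map_smul, hu, FF.smul_mk, RL]

theorem FF.proj (I : Submodule Bᵐᵒᵖ B) [Module.Projective (Env k B) P] :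
    Module.Projective Bᵐᵒᵖ (FF k I P) := by
  classical
  refine Module.Projective.of_lifting_property'' fun g hg => ?_
  obtain ⟨s, hs⟩ := Module.projective_def'.1 (inferInstance : Module.Projective (Env k B) P)
  choose H h1 h2 h3 using FF.proj_aux (k := k) (P := P) I g hg
  let h : (P →₀ Env k B) →+ (FF k I P →₀ Bᵐᵒᵖ) := Finsupp.liftAddHom H
  have hh : ∀ p a, h (Finsupp.single p a) = H p a := fun p a => by simp [h]
  have e1 : ∀ (c : Bᵐᵒᵖ) x, h ((1 ⊗ₜ c : Env k B) • x) = c • h x := by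
    intro c x
    induction x using Finsupp.induction_linear with
    | zero => simp
    | add x y hx hy => rw [smul_add, map_add, hx, hy, map_add, smul_add]
    | single p a => rw [Finsupp.smul_single, hh, hh, smul_eq_mul, h1]
  have e2 : ∀ b ∈ I, ∀ x, h ((b ⊗ₜ 1 : Env k B) • x) = 0 := by
    intro c hc x
    induction x using Finsupp.induction_linear with
    | zero => simp
    | add x y hx hy => rw [smul_add, map_add, hx, hy, add_zero]
    | single p a => rw [Finsupp.smul_single, hh, smul_eq_mul, h2 _ _ hc]
  have e3 : ∀ x, g (h x) = FF.mk (k := k) I (Finsupp.linearCombination (Env k B) id x) := by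
    intro x
    induction x using Finsupp.induction_linear with
    | zero => simp
    | add x y hx hy => rw [map_add, map_add, hx, hy, map_add, map_add]
    | single p a => rw [hh, h3]; simp
  refine ⟨FF.lift I (h.comp s.toAddMonoidHom) ?_ ?_, ?_⟩
  · intro c p
    change h (s _) = c • h (s p)
    rw [map_smul, e1]
  · intro b hb p
    change h (s _) = 0
    rw [map_smul, e2 _ hb]
  · refine LinearMap.ext fun x => ?_
    obtain ⟨x, rfl⟩ := FF.mk_surj _ x
    rw [LinearMap.comp_apply, FF.lift_mk]
    change g (h (s x)) = _
    rw [e3, ← LinearMap.comp_apply, hs]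
    rfl

/-- the hypothesis that the radical of the enveloping algebra is small -/
def RadHyp (k B : Type) [Field k] [Ring B] [Algebra k B] : Prop :=
  ∀ x ∈ Ring.jacobson (Env k B), x ∈ AddSubgroup.closure
    {x : Env k B | ∃ b c, x = b ⊗ₜ c ∧ (b ∈ Ring.jacobson B ∨ c ∈ Ring.jacobson Bᵐᵒᵖ)}

variable {Q : Type} [AddCommGroup Q] [Module (Env k B) Q]

theorem FF.min (hr : RadHyp k B) (I : Submodule Bᵐᵒᵖ B) (hI : ∀ b ∈ Ring.jacobson B, b ∈ I)
    (p : P →ₗ[Env k B] Q) (hp : Function.Surjective p)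
    (h : LinearMap.ker p ≤ Ring.jacobson (Env k B) • (⊤ : Submodule (Env k B) P)) :
    LinearMap.ker (FF.map I p) ≤ Ring.jacobson Bᵐᵒᵖ • (⊤ : Submodule Bᵐᵒᵖ (FF k I P)) := by
  intro x hx
  obtain ⟨x, rfl⟩ := FF.mk_surj _ x
  rw [LinearMap.mem_ker, FF.map_mk] at hx
  obtain ⟨z, hz, hz'⟩ := IP_surj p hp hx
  have h3 : x - z ∈ LinearMap.ker p := by
    rw [LinearMap.mem_ker, map_sub, hz', sub_self]
  have h4 := h h3
  have h5 : FF.mk (k := k) I x = FF.mk I (x - z) := by rw [map_sub, hz, sub_zero]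
  rw [h5]
  clear h5 h3
  revert h4
  generalize x - z = y
  intro hy
  refine Submodule.smul_induction_on hy ?_ ?_
  · intro r hr' n _
    have := hr r hr'
    clear hr'
    induction this using AddSubgroup.closure_induction with
    | mem x hx =>
      obtain ⟨b, c, rfl, hb | hc⟩ := hx
      · rw [FF.mk_left (hI b hb)]; exact Submodule.zero_mem _
      · rw [← RL, ← FF.smul_mk]
        exact Submodule.smul_mem_smul hc trivial
    | zero =>
      have h0 : (0 : Env k B) • n = 0 := zero_smul (Env k B) n
      have h1 := (congrArg (FF.mk (k := k) I) h0).trans (map_zero _)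
      exact Eq.subst (motive := fun t => t ∈ Ring.jacobson Bᵐᵒᵖ • (⊤ : Submodule Bᵐᵒᵖ (FF k I P)))
        h1.symm (Submodule.zero_mem _)
    | add x y _ _ hx hy => rw [add_smul, map_add]; exact Submodule.add_mem _ hx hy
    | neg x _ hx => rw [neg_smul, map_neg]; exact Submodule.neg_mem _ hx
  · intro x y hx hy
    rw [map_add]; exact Submodule.add_mem _ hx hy

theorem FF.syz (I : Submodule Bᵐᵒᵖ B) (b : Prop)
    (hb : b → RadHyp k B ∧ ∀ b ∈ Ring.jacobson B, b ∈ I) (K M : ModuleCat.{0} (Env k B)) (n : ℕ)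
    (h : Syz (Env k B) b K n M) (hM : Module.Projective B (Lt k B M)) :
    Syz Bᵐᵒᵖ b (ModuleCat.of _ (FF k I K)) n (ModuleCat.of _ (FF k I M)) := by
  induction h with
  | zero e =>
    refine .zero (LinearEquiv.ofLinearMap (FF.map I e.toLinearMap) (FF.map I e.symm.toLinearMap) ?_ ?_)
    · refine LinearMap.ext fun x => ?_
      obtain ⟨x, rfl⟩ := FF.mk_surj _ x
      change FF.mk I (e (e.symm x)) = FF.mk I x
      rw [e.apply_symm_apply]
    · refine LinearMap.ext fun x => ?_
      obtain ⟨x, rfl⟩ := FF.mk_surj _ x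
      change FF.mk I (e.symm (e x)) = FF.mk I x
      rw [e.symm_apply_apply]
  | @succ _ _ P' _ i p hP hi hp hex hm h ih =>
    obtain ⟨r, hr⟩ := Lt.retract i p hi hp hex hM
    have := Lt.proj k B
    have hY := Module.Projective.of_split _ _ hr
    have hPP := @FF.proj k B _ _ _ _ _ _ I hP
    exact Syz.succ (P := ModuleCat.of _ (FF k I P')) (FF.map I i) (FF.map I p) hPP (FF.map_inj I i r hr)
      (FF.map_surj I p hp) (FF.map_exact I i p hp hex)
      (fun hb' => FF.min (hb hb').1 I (hb hb').2 p hp (hm hb')) (ih hY)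

theorem Syz.left_proj {b : Prop} {K M : ModuleCat.{0} (Env k B)} {n : ℕ}
    (h : Syz (Env k B) b K n M) (hM : Module.Projective B (Lt k B M)) :
    Module.Projective B (Lt k B K) := by
  induction h with
  | zero e =>
    refine Module.Projective.of_split (Lt.map e.toLinearMap) (Lt.map e.symm.toLinearMap) ?_
    ext x
    exact e.symm_apply_apply x
  | succ i p hP hi hp hex hm h ih =>
    obtain ⟨r, hr⟩ := Lt.retract i p hi hp hex hM
    have := Lt.proj k B
    exact ih (Module.Projective.of_split _ _ hr)

theorem Syz.right_proj {b : Prop} {K M : ModuleCat.{0} (Env k B)} {n : ℕ}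
    (h : Syz (Env k B) b K n M) (hM : Module.Projective Bᵐᵒᵖ (Rt k B M)) :
    Module.Projective Bᵐᵒᵖ (Rt k B K) := by
  induction h with
  | zero e =>
    refine Module.Projective.of_split (Rt.map e.toLinearMap) (Rt.map e.symm.toLinearMap) ?_
    ext x
    exact e.symm_apply_apply x
  | succ i p hP hi hp hex hm h ih =>
    obtain ⟨r, hr⟩ := Rt.retract i p hi hp hex hM
    have := Rt.proj k B
    exact ih (Module.Projective.of_split _ _ hr)

end Bimod2

theorem semisimple_descent {k K W W' : Type} [Field k] [Field K] [Algebra k K] [Ring W] [Algebra k W]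
    [FiniteDimensional k W] [Ring W'] [Algebra K W'] (f : W →+* W')
    (hf : ∀ (c : k) x, f (c • x) = algebraMap k K c • f x)
    (hspan : Submodule.span K (Set.range f) = ⊤)
    (hdim : Module.finrank k W = Module.finrank K W') [IsSemisimpleRing W'] :
    IsSemisimpleRing W := by
  classical
  have : IsArtinianRing W := IsArtinianRing.of_finite k W
  have hinj : Function.Injective f := by
    rw [injective_iff_map_eq_zero]
    intro x hx
    let b := Module.finBasis k W
    have hli : LinearIndependent K (fun i => f (b i)) := by
      apply linearIndependent_of_top_le_span_of_card_eq_finrank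
      · rw [← hspan, Submodule.span_le]
        rintro _ ⟨x, rfl⟩
        rw [← b.sum_repr x, map_sum]
        refine Submodule.sum_mem _ fun i _ => ?_
        rw [hf]
        exact Submodule.smul_mem _ _ (Submodule.subset_span ⟨i, rfl⟩)
      · simpa using hdim
    have h := Fintype.linearIndependent_iff.1 hli (fun i => algebraMap k K (b.repr x i)) (by
      rw [← hx]
      conv_rhs => rw [← b.sum_repr x, map_sum]
      simp only [hf])
    rw [← b.sum_repr x]
    refine Finset.sum_eq_zero fun i _ => ?_
    rw [(map_eq_zero _).1 (h i), zero_smul]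
  rw [IsArtinianRing.isSemisimpleRing_iff_jacobson]
  obtain ⟨n, hn⟩ := IsSemiprimaryRing.isNilpotent (R := W)
  rw [eq_bot_iff]
  intro x hx
  rw [Submodule.mem_bot]
  apply hinj
  rw [map_zero, ← Submodule.mem_bot W', ← IsSemisimpleRing.jacobson_eq_bot W',
    ← Ideal.jacobson_bot, Ideal.mem_jacobson_iff]
  intro y
  have hN : IsNilpotent (y * f x) := by
    let N : Set W' := f '' (Ring.jacobson W : Set W)
    have h1 : y * f x ∈ Submodule.span K N := by
      have h2 : y * f x ∈ Submodule.span K (Set.range f) * Submodule.span K N :=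
        Submodule.mul_mem_mul (by rw [hspan]; trivial) (Submodule.subset_span ⟨x, hx, rfl⟩)
      rw [Submodule.span_mul_span] at h2
      refine Submodule.span_mono ?_ h2
      rintro _ ⟨_, ⟨a, rfl⟩, _, ⟨b, hb, rfl⟩, rfl⟩
      exact ⟨a * b, Ideal.mul_mem_left _ _ hb, map_mul f a b⟩
    have h3 : ∀ m, (y * f x) ^ m ∈
        Submodule.span K (f '' ((Ring.jacobson W ^ m : Ideal W) : Set W)) := by
      intro m
      induction m with
      | zero =>
        rw [pow_zero]
        exact Submodule.subset_span ⟨1, by simp [Submodule.pow_zero], map_one f⟩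
      | succ m ih =>
        have h2 := Submodule.mul_mem_mul ih h1
        rw [Submodule.span_mul_span] at h2
        rw [pow_succ]
        refine Submodule.span_mono ?_ h2
        rintro _ ⟨_, ⟨a, ha, rfl⟩, _, ⟨b, hb, rfl⟩, rfl⟩
        refine ⟨a * b, ?_, map_mul f a b⟩
        rw [Submodule.pow_succ]
        exact Ideal.mul_mem_mul ha hb
    refine ⟨n, ?_⟩
    have h5 := h3 n
    rw [hn] at h5
    simpa using h5
  obtain ⟨u, hu⟩ := hN.isUnit_add_one
  refine ⟨(u⁻¹ : W'ˣ), ?_⟩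
  rw [Submodule.mem_bot, sub_eq_zero, mul_assoc]
  calc _ = (u⁻¹ : W'ˣ).1 * (y * f x + 1) := by rw [mul_add, mul_one]
    _ = 1 := by rw [← hu, Units.inv_mul]

theorem sep_aux (k K S : Type) [Field k] [Ring S] [Algebra k S] [FiniteDimensional k S]
    [Field K] [Algebra k K] [IsAlgClosed K] (h : IsSemisimpleRing (K ⊗[k] S)) :
    IsSemisimpleRing (S ⊗[k] Sᵐᵒᵖ) := by
  classical
  have hWW : IsSemisimpleRing ((K ⊗[k] S)ᵐᵒᵖ ⊗[K] (K ⊗[k] S)) := by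
    obtain ⟨n, d, _, ⟨e⟩⟩ := IsSemisimpleRing.exists_algEquiv_pi_matrix_of_isAlgClosed K (K ⊗[k] S)
    let e1 : ((K ⊗[k] S)ᵐᵒᵖ ⊗[K] (K ⊗[k] S)) ≃ₐ[K] (K ⊗[k] S)ᵐᵒᵖ ⊗[K] (Π i, Matrix (Fin (d i)) (Fin (d i)) K) :=
      Algebra.TensorProduct.congr AlgEquiv.refl e
    let e2 := Algebra.TensorProduct.piRight K K (K ⊗[k] S)ᵐᵒᵖ (fun i => Matrix (Fin (d i)) (Fin (d i)) K)
    let e3 : (Π i, (K ⊗[k] S)ᵐᵒᵖ ⊗[K] Matrix (Fin (d i)) (Fin (d i)) K) ≃ₐ[K]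
      (Π i, Matrix (Fin (d i)) (Fin (d i)) (K ⊗[k] S)ᵐᵒᵖ) :=
      AlgEquiv.piCongrRight fun i => (matrixEquivTensor (Fin (d i)) K (K ⊗[k] S)ᵐᵒᵖ).symm
    exact (e1.trans (e2.trans e3)).symm.toRingEquiv.isSemisimpleRing
  let g1 : S →ₐ[k] ((K ⊗[k] S)ᵐᵒᵖ ⊗[K] (K ⊗[k] S)) := ((Algebra.TensorProduct.includeRight : (K ⊗[k] S) →ₐ[K] ((K ⊗[k] S)ᵐᵒᵖ ⊗[K] (K ⊗[k] S))).restrictScalars k).comp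
    Algebra.TensorProduct.includeRight
  let g2 : Sᵐᵒᵖ →ₐ[k] ((K ⊗[k] S)ᵐᵒᵖ ⊗[K] (K ⊗[k] S)) := ((Algebra.TensorProduct.includeLeft : (K ⊗[k] S)ᵐᵒᵖ →ₐ[K] ((K ⊗[k] S)ᵐᵒᵖ ⊗[K] (K ⊗[k] S))).restrictScalars k).comp
    (AlgHom.op (Algebra.TensorProduct.includeRight : S →ₐ[k] (K ⊗[k] S)))
  let f : S ⊗[k] Sᵐᵒᵖ →ₐ[k] ((K ⊗[k] S)ᵐᵒᵖ ⊗[K] (K ⊗[k] S)) := Algebra.TensorProduct.lift g1 g2 (by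
    intro x y
    simp [g1, g2, Commute, SemiconjBy, Algebra.TensorProduct.tmul_mul_tmul])
  have hft : ∀ s t, f (s ⊗ₜ t) = (MulOpposite.op (1 ⊗ₜ t.unop : (K ⊗[k] S))) ⊗ₜ (1 ⊗ₜ s : (K ⊗[k] S)) := by
    intro s t
    have h1 : f (s ⊗ₜ t) = g1 s * g2 t := Algebra.TensorProduct.lift_tmul _ _ _ _ _
    rw [h1]
    simp [g1, g2]
  refine semisimple_descent (k := k) (K := K) (W' := ((K ⊗[k] S)ᵐᵒᵖ ⊗[K] (K ⊗[k] S))) f.toRingHom ?_ ?_ ?_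
  · intro c x
    change f (c • x) = _
    rw [map_smul, ← algebraMap_smul K c (f x)]
    rfl
  · rw [eq_top_iff]
    rintro x -
    induction x using TensorProduct.induction_on with
    | zero => exact Submodule.zero_mem _
    | add x y hx hy => exact Submodule.add_mem _ hx hy
    | tmul a b =>
      obtain ⟨a, rfl⟩ := MulOpposite.op_surjective a
      induction a using TensorProduct.induction_on with
      | zero => rw [MulOpposite.op_zero, zero_tmul]; exact Submodule.zero_mem _
      | add x y hx hy => rw [MulOpposite.op_add, add_tmul]; exact Submodule.add_mem _ hx hy
      | tmul a t =>
        induction b using TensorProduct.induction_on with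
        | zero => rw [tmul_zero]; exact Submodule.zero_mem _
        | add x y hx hy => rw [tmul_add]; exact Submodule.add_mem _ hx hy
        | tmul b s =>
          have : (MulOpposite.op (a ⊗ₜ t : (K ⊗[k] S))) ⊗ₜ (b ⊗ₜ s : (K ⊗[k] S)) =
              (a * b) • f (s ⊗ₜ MulOpposite.op t) := by
            rw [hft, mul_smul, ← tmul_smul, smul_tmul']
            simp [← MulOpposite.op_smul, smul_tmul']
          rw [this]
          exact Submodule.smul_mem _ _ (Submodule.subset_span ⟨_, rfl⟩)
  · have h1 : Module.finrank K (K ⊗[k] S)ᵐᵒᵖ = Module.finrank K (K ⊗[k] S) :=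
      (MulOpposite.opLinearEquiv K).symm.finrank_eq
    have h2 : Module.finrank k Sᵐᵒᵖ = Module.finrank k S :=
      (MulOpposite.opLinearEquiv k).symm.finrank_eq
    rw [Module.finrank_tensorProduct, Module.finrank_tensorProduct, h1, h2,
      Module.finrank_baseChange]

theorem sep_semisimple (k S : Type) [Field k] [Ring S] [Algebra k S] [FiniteDimensional k S]
    (h : ∀ (K : Type) [Field K] [Algebra k K], IsSemisimpleRing (K ⊗[k] S)) :
    IsSemisimpleRing (S ⊗[k] Sᵐᵒᵖ) := sep_aux k (AlgebraicClosure k) S (h _)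

theorem jac_left_inv {R : Type} [Ring R] {x : R} (hx : x ∈ Ring.jacobson R) :
    ∃ z, z * (1 + x) = 1 ∧ z - 1 ∈ Ring.jacobson R := by
  have hx' := hx
  rw [← Ideal.jacobson_bot, Ideal.mem_jacobson_iff] at hx'
  obtain ⟨z, hz⟩ := hx' 1
  rw [Submodule.mem_bot, mul_one, sub_eq_zero] at hz
  refine ⟨z, by rw [mul_add, mul_one, add_comm, hz], ?_⟩
  have : z - 1 = (-z) * x := by rw [← hz]; noncomm_ring
  rw [this]
  exact Ideal.mul_mem_left _ _ hx

theorem jac_op {R : Type} [Ring R] {x : R} (hx : x ∈ Ring.jacobson R) :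
    MulOpposite.op x ∈ Ring.jacobson Rᵐᵒᵖ := by
  rw [← Ideal.jacobson_bot, Ideal.mem_jacobson_iff]
  intro y
  have hxy : x * y.unop ∈ Ring.jacobson R := Ideal.mul_mem_right _ _ hx
  obtain ⟨z, hz, hz'⟩ := jac_left_inv hxy
  obtain ⟨w, hw, -⟩ := jac_left_inv hz'
  rw [add_sub_cancel] at hw
  have h2 : w = 1 + x * y.unop := by
    calc w = w * (z * (1 + x * y.unop)) := by rw [hz, mul_one]
      _ = 1 + x * y.unop := by rw [← mul_assoc, hw, one_mul]
  refine ⟨MulOpposite.op z, ?_⟩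
  rw [Submodule.mem_bot, sub_eq_zero]
  apply MulOpposite.unop_injective
  rw [h2] at hw
  simp only [MulOpposite.unop_add, MulOpposite.unop_mul, MulOpposite.unop_op, MulOpposite.unop_one]
  rw [← hw, ← mul_assoc, add_mul, one_mul, add_comm]

theorem jac_le_max {B : Type} [Ring B] (I : Submodule Bᵐᵒᵖ B) [IsSimpleModule Bᵐᵒᵖ (B ⧸ I)] :
    ∀ b ∈ Ring.jacobson B, b ∈ I := by
  intro b hb
  have h := IsSemisimpleModule.jacobson_le_annihilator Bᵐᵒᵖ (B ⧸ I) (jac_op hb)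
  rw [Module.mem_annihilator] at h
  have h2 := h (I.mkQ 1)
  rw [← map_smul, MulOpposite.smul_eq_mul_unop, one_mul] at h2
  exact (Submodule.Quotient.mk_eq_zero _).1 h2

theorem radHyp_aux (k B S : Type) [Field k] [Ring B] [Algebra k B] [FiniteDimensional k B]
    [Ring S] [Algebra k S] (π : B →ₐ[k] S) (hπ : Function.Surjective π)
    (hk : RingHom.ker π = Ring.jacobson B)
    (h : ∀ (K : Type) [Field K] [Algebra k K], IsSemisimpleRing (K ⊗[k] S)) : RadHyp k B := by
  have : FiniteDimensional k S := Module.Finite.of_surjective π.toLinearMap hπ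
  have hW := sep_semisimple k S h
  have hπ' : Function.Surjective (AlgHom.op π) := by
    intro x
    obtain ⟨y, hy⟩ := hπ x.unop
    exact ⟨MulOpposite.op y, by simp [hy]⟩
  let F : Env k B →ₐ[k] S ⊗[k] Sᵐᵒᵖ := Algebra.TensorProduct.map π (AlgHom.op π)
  have hF : Function.Surjective F := by
    intro x
    induction x using TensorProduct.induction_on with
    | zero => exact ⟨0, map_zero F⟩
    | add x y hx hy =>
      obtain ⟨a, rfl⟩ := hx
      obtain ⟨b, rfl⟩ := hy
      exact ⟨a + b, map_add F _ _⟩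
    | tmul x y =>
      obtain ⟨a, rfl⟩ := hπ x
      obtain ⟨b, rfl⟩ := hπ' y
      exact ⟨a ⊗ₜ b, Algebra.TensorProduct.map_tmul _ _ _ _⟩
  intro x hx
  have : RingHomSurjective F.toRingHom := ⟨hF⟩
  have h1 := Ring.le_comap_jacobson F.toRingHom hx
  rw [IsSemisimpleRing.jacobson_eq_bot (S ⊗[k] Sᵐᵒᵖ), Ideal.mem_comap, Submodule.mem_bot] at h1
  have h2 : x ∈ RingHom.ker F := h1
  rw [Algebra.TensorProduct.map_ker _ _ hπ hπ'] at h2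
  obtain ⟨u, hu, v, hv, rfl⟩ := Submodule.mem_sup.1 h2
  have key : ∀ (T : Set (Env k B)), (∀ t ∈ T, ∃ b c, t = b ⊗ₜ c ∧
      (b ∈ Ring.jacobson B ∨ c ∈ Ring.jacobson Bᵐᵒᵖ)) → ∀ u ∈ Ideal.span T,
      u ∈ AddSubgroup.closure {x : Env k B | ∃ b c, x = b ⊗ₜ c ∧
      (b ∈ Ring.jacobson B ∨ c ∈ Ring.jacobson Bᵐᵒᵖ)} := by
    intro T hT u hu
    suffices ∀ a : Env k B, a * u ∈ AddSubgroup.closure {x : Env k B | ∃ b c, x = b ⊗ₜ c ∧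
        (b ∈ Ring.jacobson B ∨ c ∈ Ring.jacobson Bᵐᵒᵖ)} by simpa using this 1
    induction hu using Submodule.span_induction with
    | mem x hx =>
      obtain ⟨b, c, rfl, h⟩ := hT x hx
      intro a
      induction a using TensorProduct.induction_on with
      | zero => rw [zero_mul]; exact zero_mem _
      | add x y hx hy => rw [add_mul]; exact add_mem hx hy
      | tmul x y =>
        refine AddSubgroup.subset_closure ⟨x * b, y * c, Algebra.TensorProduct.tmul_mul_tmul .., ?_⟩
        exact h.imp (Ideal.mul_mem_left _ _) (Ideal.mul_mem_left _ _)
    | zero => intro a; rw [mul_zero]; exact zero_mem _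
    | add x y _ _ hx hy => intro a; rw [mul_add]; exact add_mem (hx a) (hy a)
    | smul r x _ hx => intro a; rw [smul_eq_mul, ← mul_assoc]; exact hx _
  refine add_mem (key _ ?_ u hu) (key _ ?_ v hv)
  · rintro _ ⟨b, hb, rfl⟩
    refine ⟨b, 1, rfl, Or.inl ?_⟩
    rw [← hk]; exact hb
  · rintro _ ⟨c, hc, rfl⟩
    refine ⟨1, c, rfl, Or.inr ?_⟩
    have : c.unop ∈ RingHom.ker π := congrArg MulOpposite.unop (RingHom.mem_ker.1 hc)
    rw [hk] at this
    exact jac_op this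

theorem radHyp (k B : Type) [Field k] [Ring B] [Algebra k B] [FiniteDimensional k B]
    (hsep : ∀ (S : Type) [Ring S] [Algebra k S] (π : B →ₐ[k] S),
      Function.Surjective π → RingHom.ker π = Ideal.jacobson (⊥ : Ideal B) →
      ∀ (K : Type) [Field K] [Algebra k K], IsSemisimpleRing (K ⊗[k] S)) : RadHyp k B := by
  let π : B →ₐ[k] B ⧸ Ring.jacobson B := Ideal.Quotient.mkₐ k (Ring.jacobson B)
  have hπ : Function.Surjective π := Ideal.Quotient.mkₐ_surjective k _
  have hk : RingHom.ker π = Ring.jacobson B := Ideal.Quotient.mkₐ_ker k _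
  exact radHyp_aux k B _ π hπ hk (hsep _ π hπ (by rw [hk, Ideal.jacobson_bot]))

section Twist
variable {R : Type} [Ring R]

/-- `N` is the twist of `M` by `σ`. -/
def TwRel (σ : R ≃+* R) (M N : ModuleCat.{0} R) : Prop :=
  ∃ e : M ≃+ N, ∀ (r : R) (m : M), e (σ r • m) = r • e m

theorem TwRel.symm {σ : R ≃+* R} {M N : ModuleCat.{0} R} (h : TwRel σ M N) :
    TwRel σ.symm N M := by
  obtain ⟨e, he⟩ := h
  refine ⟨e.symm, fun r m => ?_⟩
  obtain ⟨m, rfl⟩ := e.surjective m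
  rw [AddEquiv.symm_apply_apply, AddEquiv.symm_apply_eq, ← he, RingEquiv.apply_symm_apply]

theorem TwRel.exists (σ : R ≃+* R) (M : ModuleCat.{0} R) : ∃ N, TwRel σ M N := by
  let _ : Module R M := Module.compHom M σ.toRingHom
  exact ⟨ModuleCat.of R M, AddEquiv.refl M, fun r m => rfl⟩

theorem TwRel.proj {σ : R ≃+* R} {M N : ModuleCat.{0} R} (h : TwRel σ M N)
    (hM : Module.Projective R M) : Module.Projective R N := by
  obtain ⟨e', he'⟩ := h
  have : RingHomInvPair (σ.symm : R →+* R) (σ : R →+* R) := ⟨by ext; simp, by ext; simp⟩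
  have : RingHomInvPair (σ : R →+* R) (σ.symm : R →+* R) := ⟨by ext; simp, by ext; simp⟩
  refine Module.Projective.of_equiv (M := M) 
    ({ e' with
        map_smul' := fun r m => ?_ } : M ≃ₛₗ[(σ.symm : R →+* R)] N)
  change e' (r • m) = σ.symm r • e' m
  rw [← he', RingEquiv.apply_symm_apply]

/-- conjugate a linear map -/
def twConj (σ : R ≃+* R) {M N M' N' : ModuleCat.{0} R} (e : M ≃+ M') (e' : N ≃+ N')
    (he : ∀ (r : R) (m : M), e (σ r • m) = r • e m) (he' : ∀ (r : R) (m : N), e' (σ r • m) = r • e' m)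
    (f : M →ₗ[R] N) : M' →ₗ[R] N' where
  toFun x := e' (f (e.symm x))
  map_add' x y := by simp
  map_smul' r x := by
    obtain ⟨x, rfl⟩ := e.surjective x
    rw [← he, AddEquiv.symm_apply_apply, map_smul, he']
    simp

theorem TwRel.syz {σ : R ≃+* R} {K L : ModuleCat.{0} R} {n : ℕ} (h : Syz R False K n L)
    {K' : ModuleCat.{0} R} (hK : TwRel σ K K') : ∀ L', TwRel σ L L' → Syz R False K' n L' := by
  obtain ⟨eK, heK⟩ := hK
  induction h with
  | zero e =>
    rintro L' ⟨eL, heL⟩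
    refine .zero (LinearEquiv.ofBijective (twConj σ eK eL heK heL e.toLinearMap) ?_)
    exact (eL.bijective.comp e.bijective).comp eK.symm.bijective
  | @succ n M P Y i p hP hi hp hex hb h ih =>
    rintro L' ⟨eL, heL⟩
    obtain ⟨P', hP'⟩ := TwRel.exists σ P
    have hP2 := hP'.proj hP
    obtain ⟨eP, heP⟩ := hP'
    obtain ⟨Y', eY, heY⟩ := TwRel.exists σ Y
    refine .succ (twConj σ eY eP heY heP i) (twConj σ eP eL heP heL p) hP2 ?_ ?_ ?_ (fun h => h.elim)
      (ih _ ⟨eY, heY⟩)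
    · exact (eP.injective.comp hi).comp eY.symm.injective
    · exact (eL.surjective.comp hp).comp eP.symm.surjective
    · intro x
      obtain ⟨x, rfl⟩ := eP.surjective x
      change eL (p (eP.symm (eP x))) = 0 ↔ _
      rw [AddEquiv.symm_apply_apply, EmbeddingLike.map_eq_zero_iff, hex x]
      constructor
      · rintro ⟨y, rfl⟩
        refine ⟨eY y, ?_⟩
        change eP (i (eY.symm (eY y))) = _
        rw [AddEquiv.symm_apply_apply]
      · rintro ⟨y, hy⟩
        exact ⟨eY.symm y, eP.injective hy⟩

theorem TwRel.simple {σ : R ≃+* R} {M N : ModuleCat.{0} R} (h : TwRel σ M N)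
    (hM : IsSimpleModule R M) : IsSimpleModule R N := by
  obtain ⟨e, he⟩ := h
  have : Nontrivial M := IsSimpleModule.nontrivial R M
  have : Nontrivial N := e.symm.toEquiv.nontrivial
  rw [isSimpleModule_iff_toSpanSingleton_surjective] at hM ⊢
  refine ⟨this, fun x hx y => ?_⟩
  obtain ⟨x, rfl⟩ := e.surjective x
  obtain ⟨y, rfl⟩ := e.surjective y
  obtain ⟨r, hr⟩ := hM.2 x (by rintro rfl; simp at hx) y
  refine ⟨σ.symm r, ?_⟩
  rw [LinearMap.toSpanSingleton_apply] at hr ⊢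
  rw [← he, RingEquiv.apply_symm_apply, hr]

theorem periodic_of_twist [IsArtinianRing R] (σ : R ≃+* R) (n : ℕ) (hn : 1 ≤ n)
    (h : ∀ M : ModuleCat.{0} R, IsSimpleModule R M → ∃ K, TwRel σ M K ∧ Syz R False K n M)
    (M : ModuleCat.{0} R) (hM : IsSimpleModule R M) : ∃ m, 1 ≤ m ∧ Syz R False M m M := by
  let T := {M : ModuleCat.{0} R // IsSimpleModule R M}
  choose K hK1 hK2 using h
  let s : ℕ → T := fun i => Nat.rec ⟨M, hM⟩ (fun _ N => ⟨K N.1 N.2, (hK1 N.1 N.2).simple N.2⟩) i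
  have hs1 : ∀ i, TwRel σ (s i).1 (s (i + 1)).1 := fun i => hK1 _ _
  have hs2 : ∀ i, Syz R False (s (i + 1)).1 n (s i).1 := fun i => hK2 _ _
  have hs3 : ∀ i d, Syz R False (s (i + d)).1 (d * n) (s i).1 := by
    intro i d
    induction d with
    | zero => rw [zero_mul]; exact .zero (LinearEquiv.refl _ _)
    | succ d ih =>
      have := Syz.trans (hs2 (i + d)) ih
      rwa [show (d + 1) * n = n + d * n by ring]
  have hs4 : ∀ i, (∃ m, 1 ≤ m ∧ Syz R False (s i).1 m (s i).1) → 
      ∃ m, 1 ≤ m ∧ Syz R False M m M := by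
    intro i
    induction i with
    | zero => exact id
    | succ i ih =>
      rintro ⟨m, hm, h⟩
      exact ih ⟨m, hm, TwRel.syz h (hs1 i).symm _ (hs1 i).symm⟩
  obtain ⟨ι, _, S, hS⟩ := finite_simples R
  choose f hf using fun i => hS (s i).1 (s i).2
  obtain ⟨i, j, hne, hij⟩ := Finite.exists_ne_map_eq_of_infinite f
  wlog hlt : i < j generalizing i j
  · exact this j i hne.symm hij.symm (lt_of_le_of_ne (not_lt.1 hlt) hne.symm)
  obtain ⟨d, rfl⟩ := Nat.exists_eq_add_of_lt hlt
  obtain ⟨e1⟩ := hf i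
  obtain ⟨e2⟩ := hf (i + d + 1)
  rw [← hij] at e2
  refine hs4 i ⟨(d + 1) * n, Nat.mul_pos (Nat.succ_pos _) hn, ?_⟩
  exact Syz.congr_left (hs3 i (d + 1)) (e2.trans e1.symm)

end Twist

section RegTw
variable (k B : Type) [Field k] [Ring B] [Algebra k B]

/-- tautological map -/
noncomputable def Reg.of : B ≃+ regularBimodule k B := AddEquiv.refl B

/-- tautological map -/
noncomputable def Tw.of (φ : B ≃ₐ[k] B) : B ≃+ twistedBimodule k B φ := AddEquiv.refl B

theorem Reg.smul_of (b : B) (c : Bᵐᵒᵖ) (x : B) :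
    (b ⊗ₜ c : Env k B) • Reg.of k B x = Reg.of k B (b * x * c.unop) := by
  let _ : Module (B ⊗[k] Bᵐᵒᵖ) B := TensorProduct.Algebra.module
  change ((b ⊗ₜ c : Env k B) • x : B) = b * x * c.unop
  rw [TensorProduct.Algebra.smul_def, MulOpposite.smul_eq_mul_unop, smul_eq_mul, mul_assoc]

theorem Tw.smul_of (φ : B ≃ₐ[k] B) (b : B) (c : Bᵐᵒᵖ) (x : B) :
    (b ⊗ₜ c : Env k B) • Tw.of k B φ x = Tw.of k B φ (b * x * φ c.unop) := by
  let _ : Module (B ⊗[k] Bᵐᵒᵖ) B := TensorProduct.Algebra.module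
  change ((Algebra.TensorProduct.map (AlgHom.id k B) (AlgEquiv.op φ).toAlgHom)
    (b ⊗ₜ c : Env k B) • x : B) = b * x * φ c.unop
  rw [Algebra.TensorProduct.map_tmul, TensorProduct.Algebra.smul_def,
    MulOpposite.smul_eq_mul_unop, smul_eq_mul, mul_assoc]
  rfl

variable {k B}

theorem FF.quot {T : Type} [AddCommGroup T] [Module (Env k B) T] (of : B ≃+ T) (φ : B ≃ₐ[k] B)
    (h : ∀ (b : B) (c : Bᵐᵒᵖ) x, (b ⊗ₜ c : Env k B) • of x = of (b * x * φ c.unop))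
    (I : Submodule Bᵐᵒᵖ B) :
    ∃ e : (B ⧸ I) ≃+ FF k I T, (∀ x, e (I.mkQ x) = FF.mk I (of x)) ∧
      ∀ (c : Bᵐᵒᵖ) x, e (MulOpposite.op (φ c.unop) • x) = c • e x := by
  have key : ∀ x, FF.mk (k := k) I (of x) = 0 ↔ x ∈ I := by
    intro x
    constructor
    · intro hx
      rw [FF.mk_eq_zero] at hx
      have := IP_induction (C := fun y => of.symm y ∈ I) (by simp)
        (fun x y hx hy => by simpa using I.add_mem hx hy) ?_ hx
      · simpa using this
      · intro b hb p
        obtain ⟨p, rfl⟩ := of.surjective p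
        rw [h, AddEquiv.symm_apply_apply]
        simpa using I.smul_mem (MulOpposite.op p) hb
    · intro hx
      have h2 := FF.mk_left (k := k) hx 1 (of 1)
      rwa [h, mul_one, MulOpposite.unop_one, map_one, mul_one] at h2
  let g : (B ⧸ I) →+ FF k I T := QuotientAddGroup.lift I.toAddSubgroup
    ((FF.mk (k := k) I).comp of.toAddMonoidHom) (fun x hx => (key x).2 hx)
  have hg : ∀ x, g (I.mkQ x) = FF.mk (k := k) I (of x) := fun x => rfl
  have hbij : Function.Bijective g := by
    constructor
    · rw [injective_iff_map_eq_zero]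
      intro x hx
      obtain ⟨x, rfl⟩ := I.mkQ_surjective x
      rw [hg, key] at hx
      simpa using hx
    · intro y
      obtain ⟨y, rfl⟩ := FF.mk_surj _ y
      obtain ⟨y, rfl⟩ := of.surjective y
      exact ⟨I.mkQ y, rfl⟩
  refine ⟨AddEquiv.ofBijective g hbij, hg, fun c x => ?_⟩
  obtain ⟨x, rfl⟩ := I.mkQ_surjective x
  simp only [AddEquiv.ofBijective_apply]
  rw [← map_smul, hg, hg, FF.smul_mk, h, one_mul, MulOpposite.smul_eq_mul_unop,
    MulOpposite.unop_op]

theorem FF.reg (I : Submodule Bᵐᵒᵖ B) : ∃ e : (B ⧸ I) ≃ₗ[Bᵐᵒᵖ] FF k I (regularBimodule k B),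
    ∀ x, e (I.mkQ x) = FF.mk I (Reg.of k B x) := by
  obtain ⟨e, he, he'⟩ := FF.quot (Reg.of k B) AlgEquiv.refl (Reg.smul_of k B) I
  exact ⟨{ e with map_smul' := fun c x => he' c x }, he⟩

variable (k B)

theorem Reg.left_proj : Module.Projective B (Lt k B (regularBimodule k B)) := by
  refine Module.Projective.of_equiv' (M := B)
    { (Reg.of k B).trans (Lt.of k B) with map_smul' := fun b x => ?_ }
  change Lt.of k B (Reg.of k B (b * x)) = b • Lt.of k B (Reg.of k B x)
  rw [Lt.smul_of, Reg.smul_of]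
  simp

theorem Reg.right_proj : Module.Projective Bᵐᵒᵖ (Rt k B (regularBimodule k B)) := by
  have hB : Module.Projective Bᵐᵒᵖ B := 
    Module.Projective.of_equiv' (M := Bᵐᵒᵖ)
      { MulOpposite.opAddEquiv.symm with map_smul' := fun b x => by simp }
  refine Module.Projective.of_equiv' (M := B)
    { (Reg.of k B).trans (Rt.of k B) with map_smul' := fun b x => ?_ }
  change Rt.of k B (Reg.of k B (x * b.unop)) = b • Rt.of k B (Reg.of k B x)
  rw [Rt.smul_of, Reg.smul_of]
  simp

theorem opArt [FiniteDimensional k B] : IsArtinianRing Bᵐᵒᵖ := IsArtinianRing.of_finite k Bᵐᵒᵖ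

theorem envArt [FiniteDimensional k B] : IsArtinianRing (Env k B) :=
  IsArtinianRing.of_finite k (Env k B)

variable {B} in
theorem exists_quot (M : Type) [AddCommGroup M] [Module Bᵐᵒᵖ M] (hM : IsSimpleModule Bᵐᵒᵖ M) :
    ∃ I : Submodule Bᵐᵒᵖ B, Nonempty ((B ⧸ I) ≃ₗ[Bᵐᵒᵖ] M) := by
  have := IsSimpleModule.nontrivial Bᵐᵒᵖ M
  obtain ⟨m, hm⟩ := exists_ne (0 : M)
  have h := (isSimpleModule_iff_toSpanSingleton_surjective.1 hM).2 m hm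
  let f : B →ₗ[Bᵐᵒᵖ] M :=
    { toFun := fun b => MulOpposite.op b • m
      map_add' := fun x y => by rw [MulOpposite.op_add, add_smul]
      map_smul' := fun c x => by
        rw [RingHom.id_apply, ← mul_smul, MulOpposite.smul_eq_mul_unop]; rfl }
  refine ⟨LinearMap.ker f, ⟨f.quotKerEquivOfSurjective fun x => ?_⟩⟩
  obtain ⟨c, hc⟩ := h x
  exact ⟨c.unop, hc⟩

theorem forward [FiniteDimensional k B] (h : IsTwistedPeriodicAlgebra k B)
    (M : Type) [AddCommGroup M] [Module Bᵐᵒᵖ M] (hM : IsSimpleModule Bᵐᵒᵖ M) :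
    ∃ m : ℕ, 1 ≤ m ∧
      HasProjExactSeq Bᵐᵒᵖ (ModuleCat.of Bᵐᵒᵖ M) (ModuleCat.of Bᵐᵒᵖ M) m := by
  obtain ⟨n, φ, hn, h⟩ := h
  rw [hasProjExactSeq_iff] at h
  have := opArt k B
  simp only [hasProjExactSeq_iff]
  refine periodic_of_twist (AlgEquiv.op φ).toRingEquiv n hn (fun M hM => ?_) (.of _ M) hM
  obtain ⟨I, ⟨e⟩⟩ := exists_quot (B := B) M hM
  have h1 := FF.syz I False (fun h => h.elim) _ _ n h (Reg.left_proj k B)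
  refine ⟨_, ?_, Syz.congr_right h1 ?_⟩
  · obtain ⟨e', he, he'⟩ := FF.quot (Tw.of k B φ) φ (Tw.smul_of k B φ) I
    refine ⟨e.symm.toAddEquiv.trans e', fun r m => ?_⟩
    change e' (e.symm _) = r • e' (e.symm m)
    rw [map_smul, ← he']
    rfl
  · exact (FF.reg (k := k) I).choose.symm.trans e

end RegTw

section Back1
variable {R : Type} [Ring R] [IsArtinianRing R]

theorem cover_proj_iso {P M : Type} [AddCommGroup P] [Module R P] [AddCommGroup M] [Module R M]
    [Module.Projective R M] (p : P →ₗ[R] M) (hp : Function.Surjective p)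
    (h : LinearMap.ker p ≤ Ring.jacobson R • (⊤ : Submodule R P)) : Function.Bijective p := by
  obtain ⟨s, hs⟩ := Module.projective_lifting_property p LinearMap.id hp
  have h2 : Function.Surjective s := cover_surj s p h (by rw [hs]; exact Function.surjective_id)
  refine ⟨fun x y hxy => ?_, hp⟩
  obtain ⟨x, rfl⟩ := h2 x
  obtain ⟨y, rfl⟩ := h2 y
  have h3 : ∀ x, p (s x) = x := fun x => LinearMap.congr_fun hs x
  rw [h3, h3] at hxy
  rw [hxy]

theorem Syz.proj_zero {K M : ModuleCat.{0} R} {n : ℕ} (h : Syz R True K n M)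
    (hM : Module.Projective R M) : (n = 0 → Subsingleton M) → Subsingleton K := by
  induction h with
  | zero e =>
    intro h
    have := h rfl
    exact e.toEquiv.subsingleton
  | @succ n M P Y i p hP hi hp hex hb h ih =>
    intro _
    have hpb := cover_proj_iso p hp (hb trivial)
    have hY : Subsingleton Y := by
      refine ⟨fun x y => hi (hpb.1 ?_)⟩
      rw [(hex _).2 ⟨x, rfl⟩, (hex _).2 ⟨y, rfl⟩]
    exact ih (Module.Projective.of_split (M := P) i 0 (LinearMap.ext fun x => Subsingleton.elim _ _)) fun _ => hY

theorem simple_prod {S L Z : Type} [AddCommGroup S] [Module R S] [AddCommGroup L] [Module R L]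
    [AddCommGroup Z] [Module R Z] [IsSimpleModule R S] (hZ : Module.Projective R Z)
    (hS : ¬ Module.Projective R S) (e : S ≃ₗ[R] (L × Z)) : Nonempty (S ≃ₗ[R] L) := by
  let q : S →ₗ[R] Z := LinearMap.snd R L Z ∘ₗ e.toLinearMap
  have hq : Function.Surjective q := Prod.snd_surjective.comp e.surjective
  rcases LinearMap.injective_or_eq_zero q with h | h
  · exact (hS (.of_equiv' (LinearEquiv.ofBijective q ⟨h, hq⟩).symm)).elim
  · have : Subsingleton Z := by
      refine ⟨fun x y => ?_⟩
      obtain ⟨x, rfl⟩ := hq x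
      obtain ⟨y, rfl⟩ := hq y
      rw [h]; rfl
    have : Unique Z := ⟨⟨0⟩, fun x => Subsingleton.elim _ _⟩
    exact ⟨e.trans LinearEquiv.prodUnique⟩

/-- a minimal right ideal with semisimple projective quotient -/
theorem exists_minK (N : Type) [AddCommGroup N] [Module R N] [IsArtinian R N] :
    ∃ K : Submodule R N, Module.Projective R (N ⧸ K) ∧ IsSemisimpleModule R (N ⧸ K) ∧
      ∀ (M : Type) [AddCommGroup M] [Module R M], IsSimpleModule R M → Module.Projective R M →
        ∀ f : N →ₗ[R] M, K ≤ LinearMap.ker f := by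
  let T : Set (Submodule R N) := {K | Module.Projective R (N ⧸ K) ∧ IsSemisimpleModule R (N ⧸ K)}
  have hT : T.Nonempty := by
    have : Subsingleton (N ⧸ (⊤ : Submodule R N)) := inferInstance
    refine ⟨⊤, inferInstance, ?_⟩
    have : ∀ i : Empty, IsSemisimpleModule R ((fun _ => R) i) := fun i => i.elim
    exact IsSemisimpleModule.of_injective (M := ∀ i : Empty, (fun _ => R) i) 0
      (Function.injective_of_subsingleton _)
  obtain ⟨K, ⟨h1, h2⟩, h3⟩ := IsArtinian.set_has_minimal T hT
  refine ⟨K, h1, h2, fun M _ _ hM hM' f => ?_⟩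
  let g : N →ₗ[R] (N ⧸ K) × M := K.mkQ.prod f
  have hker : LinearMap.ker g = K ⊓ LinearMap.ker f := by
    rw [LinearMap.ker_prod, Submodule.ker_mkQ]
  let g' : (N ⧸ LinearMap.ker g) →ₗ[R] (N ⧸ K) × M := (LinearMap.ker g).liftQ g le_rfl
  have hg' : Function.Injective g' := by
    rw [← LinearMap.ker_eq_bot]; exact Submodule.ker_liftQ_eq_bot _ _ _ le_rfl
  have hss : IsSemisimpleModule R ((N ⧸ K) × M) := by
    have ht := LinearMap.sup_range_inl_inr (R := R) (M := N ⧸ K) (M₂ := M)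
    have i1 := IsSemisimpleModule.range (LinearMap.inl R (N ⧸ K) M)
    have i2 := IsSemisimpleModule.range (LinearMap.inr R (N ⧸ K) M)
    have h5 := IsSemisimpleModule.sup i1 i2
    rw [ht] at h5
    exact IsSemisimpleModule.congr Submodule.topEquiv.symm
  have hmem : LinearMap.ker g ∈ T := by
    constructor
    · obtain ⟨r, hr⟩ := IsSemisimpleModule.extension_property g' hg' LinearMap.id
      exact Module.Projective.of_split g' r hr
    · exact IsSemisimpleModule.of_injective g' hg'
  have := h3 _ hmem
  rw [hker] at this
  by_contra hcon
  exact this (lt_of_le_of_ne inf_le_left fun h => hcon (inf_eq_left.1 h))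

end Back1

section Back2
variable (k B : Type) [Field k] [Ring B] [Algebra k B]

/-- the annihilator of all simple projective modules -/
noncomputable def AnnP : Submodule (Env k B) (regularBimodule k B) where
  carrier := {x | ∀ (M : Type) [AddCommGroup M] [Module Bᵐᵒᵖ M], IsSimpleModule Bᵐᵒᵖ M →
    Module.Projective Bᵐᵒᵖ M → ∀ m : M, MulOpposite.op ((Reg.of k B).symm x) • m = 0}
  add_mem' := fun {x y} hx hy M _ _ h1 h2 m => by
    rw [map_add, MulOpposite.op_add, add_smul, hx M h1 h2, hy M h1 h2, add_zero]
  zero_mem' := fun M _ _ h1 h2 m => by simp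
  smul_mem' := fun a x hx M _ _ h1 h2 m => by
    induction a using TensorProduct.induction_on with
    | zero => rw [zero_smul (Env k B) x]; simp
    | add a b ha hb => rw [add_smul, map_add, MulOpposite.op_add, add_smul, ha, hb, add_zero]
    | tmul b c =>
      obtain ⟨x, rfl⟩ := (Reg.of k B).surjective x
      rw [Reg.smul_of, AddEquiv.symm_apply_apply, MulOpposite.op_mul, MulOpposite.op_mul, mul_smul,
        mul_smul]
      have := hx M h1 h2 (MulOpposite.op b • m)
      rw [AddEquiv.symm_apply_apply] at this
      rw [this, smul_zero]

variable {k B}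

theorem AnnP_le (I : Submodule Bᵐᵒᵖ B) (h1 : IsSimpleModule Bᵐᵒᵖ (B ⧸ I))
    (h2 : Module.Projective Bᵐᵒᵖ (B ⧸ I)) (x : B) (hx : Reg.of k B x ∈ AnnP k B) : x ∈ I := by
  have := hx (B ⧸ I) h1 h2 (I.mkQ 1)
  rw [AddEquiv.symm_apply_apply, ← map_smul] at this
  simpa using this

theorem finOp : Module.Finite Bᵐᵒᵖ B :=
  Module.Finite.of_surjective (M := Bᵐᵒᵖ)
    ({ MulOpposite.opAddEquiv.symm with map_smul' := fun b x => by simp } : Bᵐᵒᵖ →ₗ[Bᵐᵒᵖ] B)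
    (MulOpposite.opAddEquiv.symm.surjective)

theorem AnnP_not_le [FiniteDimensional k B] (I : Submodule Bᵐᵒᵖ B)
    (h2 : ¬ Module.Projective Bᵐᵒᵖ (B ⧸ I)) : ∃ x : B, Reg.of k B x ∈ AnnP k B ∧ x ∉ I := by
  have := opArt k B
  have : Module.Finite Bᵐᵒᵖ B := finOp
  obtain ⟨K, h3, h4, h5⟩ := exists_minK (R := Bᵐᵒᵖ) B
  by_contra! hcon
  have hKI : K ≤ I := by
    intro x hx
    refine hcon x fun M _ _ hM1 hM2 m => ?_
    let f : B →ₗ[Bᵐᵒᵖ] M :=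
      { toFun := fun b => MulOpposite.op b • m
        map_add' := fun x y => by rw [MulOpposite.op_add, add_smul]
        map_smul' := fun c x => by
          rw [RingHom.id_apply, ← mul_smul, MulOpposite.smul_eq_mul_unop]; rfl }
    exact h5 M hM1 hM2 f hx
  apply h2
  obtain ⟨s, hs⟩ := IsSemisimpleModule.lifting_property (Submodule.factor hKI)
    (Submodule.factor_surjective hKI) LinearMap.id
  exact Module.Projective.of_split s (Submodule.factor hKI) hs

end Back2

section Back3
variable {k B : Type} [Field k] [Ring B] [Algebra k B]

theorem AnnP_quot [FiniteDimensional k B] (I : Submodule Bᵐᵒᵖ B)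
    (h1 : IsSimpleModule Bᵐᵒᵖ (B ⧸ I)) :
    (Module.Projective Bᵐᵒᵖ (B ⧸ I) →
      Nonempty (FF k I (regularBimodule k B ⧸ AnnP k B) ≃ₗ[Bᵐᵒᵖ] (B ⧸ I))) ∧
    (¬ Module.Projective Bᵐᵒᵖ (B ⧸ I) →
      Subsingleton (FF k I (regularBimodule k B ⧸ AnnP k B))) := by
  obtain ⟨e, he⟩ := FF.reg (k := k) I
  have hs := FF.map_surj I (AnnP k B).mkQ (AnnP k B).mkQ_surjective
  constructor
  · intro h2
    have hi : Function.Injective (FF.map I (AnnP k B).mkQ) := by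
      rw [injective_iff_map_eq_zero]
      intro x hx
      obtain ⟨x, rfl⟩ := FF.mk_surj _ x
      rw [FF.map_mk] at hx
      obtain ⟨z, hz, hz'⟩ := IP_surj _ (AnnP k B).mkQ_surjective hx
      have h3 : x - z ∈ AnnP k B := (Submodule.Quotient.eq _).1 hz'.symm
      obtain ⟨y, hy⟩ := (Reg.of k B).surjective (x - z)
      rw [← hy] at h3
      have h4 := AnnP_le I h1 h2 y h3
      have h5 : FF.mk (k := k) I (x - z) = 0 := by
        rw [← hy, ← he, (Submodule.Quotient.mk_eq_zero I).2 h4 |> fun h => (h : I.mkQ y = 0),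
          map_zero]
      rwa [map_sub, hz, sub_zero] at h5
    exact ⟨(e.trans (LinearEquiv.ofBijective _ ⟨hi, hs⟩)).symm⟩
  · intro h2
    obtain ⟨x, hx, hxI⟩ := AnnP_not_le (k := k) I h2
    rcases LinearMap.injective_or_eq_zero (FF.map I (AnnP k B).mkQ ∘ₗ e.toLinearMap) with h | h
    · refine (hxI ?_).elim
      have h3 : (FF.map I (AnnP k B).mkQ ∘ₗ e.toLinearMap) (I.mkQ x) = 0 := by
        change FF.map I (AnnP k B).mkQ (e (I.mkQ x)) = 0
        rw [he, FF.map_mk, (Submodule.Quotient.mk_eq_zero _).2 hx |>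
          fun h => (h : (AnnP k B).mkQ (Reg.of k B x) = 0), map_zero]
      have h4 := h (h3.trans (map_zero _).symm)
      exact (Submodule.Quotient.mk_eq_zero I).1 h4
    · refine ⟨fun a b => ?_⟩
      have h5 : Function.Surjective (FF.map I (AnnP k B).mkQ ∘ₗ e.toLinearMap) :=
        hs.comp e.surjective
      obtain ⟨a, rfl⟩ := h5 a
      obtain ⟨b, rfl⟩ := h5 b
      rw [h]; rfl

theorem Env.finite_of (M : Type) [AddCommGroup M] [Module (Env k B) M] (of : B ≃+ M)
    (h : ∀ x, (x ⊗ₜ 1 : Env k B) • of 1 = of x) : Module.Finite (Env k B) M :=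
  Module.Finite.of_surjective (LinearMap.toSpanSingleton (Env k B) M (of 1)) fun y => by
    obtain ⟨x, rfl⟩ := of.surjective y
    exact ⟨x ⊗ₜ 1, h x⟩

/-- products -/
noncomputable def FF.prodEquiv (I : Submodule Bᵐᵒᵖ B) (X Z : Type) [AddCommGroup X]
    [Module (Env k B) X] [AddCommGroup Z] [Module (Env k B) Z] :
    FF k I (X × Z) ≃ₗ[Bᵐᵒᵖ] (FF k I X × FF k I Z) :=
  LinearEquiv.ofLinearMap
    ((FF.map I (LinearMap.fst (Env k B) X Z)).prod (FF.map I (LinearMap.snd (Env k B) X Z)))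
    ((FF.map I (LinearMap.inl (Env k B) X Z)).coprod (FF.map I (LinearMap.inr (Env k B) X Z)))
    (by
      refine LinearMap.ext fun x => ?_
      obtain ⟨x, y⟩ := x
      obtain ⟨x, rfl⟩ := FF.mk_surj _ x
      obtain ⟨y, rfl⟩ := FF.mk_surj _ y
      simp [FF.map_mk])
    (by
      refine LinearMap.ext fun x => ?_
      obtain ⟨x, rfl⟩ := FF.mk_surj _ x
      simp [FF.map_mk, ← map_add])

theorem exists_X [FiniteDimensional k B] (hr : RadHyp k B) (n : ℕ)
    (hn : ∀ (M : Type) [AddCommGroup M] [Module Bᵐᵒᵖ M],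
      IsSimpleModule Bᵐᵒᵖ M → Syz Bᵐᵒᵖ False (.of Bᵐᵒᵖ M) (n + 1) (.of Bᵐᵒᵖ M)) :
    ∃ X : ModuleCat.{0} (Env k B), Module.Finite (Env k B) X ∧
      Syz (Env k B) False X (n + 1) (regularBimodule k B) ∧
      ∀ I : Submodule Bᵐᵒᵖ B, IsSimpleModule Bᵐᵒᵖ (B ⧸ I) →
        Nonempty (FF k I X ≃ₗ[Bᵐᵒᵖ] (B ⧸ I)) := by
  have := opArt k B
  have := envArt k B
  have hfin : Module.Finite (Env k B) (regularBimodule k B) :=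
    Env.finite_of _ (Reg.of k B) fun x => by rw [Reg.smul_of]; simp
  obtain ⟨X, hX1, hX2⟩ := exists_minSyz (n + 1) (regularBimodule k B)
  obtain ⟨Z, p, hZ1, hZ2, hp1, hp2⟩ := exists_cover (R := Env k B) (regularBimodule k B ⧸ AnnP k B)
  refine ⟨ModuleCat.of _ (X × Z), inferInstanceAs (Module.Finite (Env k B) (X × Z)),
    hX2.mono.add_proj Z hZ1, fun I hI => ?_⟩
  obtain ⟨e, -⟩ := FF.reg (k := k) I
  have hJ := jac_le_max I
  have h1 := FF.syz I True (fun _ => ⟨hr, hJ⟩) _ _ _ hX2 (Reg.left_proj k B)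
  have h2 := FF.min hr I hJ p hp1 hp2
  have h2' := FF.map_surj I p hp1
  obtain ⟨q1, q2⟩ := AnnP_quot (k := k) I hI
  by_cases hP : Module.Projective Bᵐᵒᵖ (B ⧸ I)
  · have hs : Subsingleton (FF k I X) := h1.proj_zero (.of_equiv' e) (by simp)
    obtain ⟨f⟩ := q1 hP
    have hP' : Module.Projective Bᵐᵒᵖ (FF k I (regularBimodule k B ⧸ AnnP k B)) := .of_equiv' f.symm
    have h3 := cover_proj_iso _ h2' h2
    have : Unique (FF k I X) := ⟨⟨0⟩, fun x => Subsingleton.elim _ _⟩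
    exact ⟨(FF.prodEquiv I X Z).trans (LinearEquiv.uniqueProd.trans
      ((LinearEquiv.ofBijective _ h3).trans f))⟩
  · have hs := q2 hP
    have hP' : Module.Projective Bᵐᵒᵖ (FF k I (regularBimodule k B ⧸ AnnP k B)) :=
      Module.Projective.of_split (M := Bᵐᵒᵖ) 0 0 (LinearMap.ext fun x => Subsingleton.elim _ _)
    have h3 := cover_proj_iso _ h2' h2
    have : Unique (FF k I Z) := ⟨⟨0⟩, fun x => h3.1 (Subsingleton.elim _ _)⟩
    obtain ⟨Q, hQ, ⟨g⟩⟩ := Syz.compare' (Syz.congr_right (hn (B ⧸ I) hI) e) h1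
    obtain ⟨g'⟩ := simple_prod hQ hP g
    exact ⟨(FF.prodEquiv I X Z).trans (LinearEquiv.prodUnique.trans g'.symm)⟩

end Back3

section Back4
variable {k B : Type} [Field k] [Ring B] [Algebra k B]
variable {X : Type} [AddCommGroup X] [Module (Env k B) X]

variable (k) in
/-- left multiplication as a right linear map -/
noncomputable def Lm (X : Type) [AddCommGroup X] [Module (Env k B) X] (b : B) :
    Rt k B X →ₗ[Bᵐᵒᵖ] Rt k B X where
  toFun x := Rt.of k B ((b ⊗ₜ 1 : Env k B) • (Rt.of k B).symm x)
  map_add' x y := by simp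
  map_smul' c x := by
    obtain ⟨x, rfl⟩ := (Rt.of k B).surjective x
    rw [Rt.smul_of, RingHom.id_apply, AddEquiv.symm_apply_apply, AddEquiv.symm_apply_apply, LR,
      Rt.smul_of, RL]

theorem Lm_of (b : B) (x : X) :
    Lm k X b (Rt.of k B x) = Rt.of k B ((b ⊗ₜ 1 : Env k B) • x) := rfl

theorem Lm_mem {I : Submodule Bᵐᵒᵖ B} {b : B} (hb : b ∈ I) (x : Rt k B X) :
    Lm k X b x ∈ IP k I X := mem_IP hb ((Rt.of k B).symm x)

theorem Lm_add (b c : B) (x : Rt k B X) : Lm k X (b + c) x = Lm k X b x + Lm k X c x := by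
  obtain ⟨x, rfl⟩ := (Rt.of k B).surjective x
  rw [Lm_of, Lm_of, Lm_of, ← map_add, ← add_smul, add_tmul]

theorem Lm_mul (b c : B) (x : Rt k B X) : Lm k X (b * c) x = Lm k X b (Lm k X c x) := by
  obtain ⟨x, rfl⟩ := (Rt.of k B).surjective x
  rw [Lm_of, Lm_of, Lm_of, ← mul_smul]
  simp

theorem Lm_one (x : Rt k B X) : Lm k X 1 x = x := by
  obtain ⟨x, rfl⟩ := (Rt.of k B).surjective x
  rw [Lm_of, ← Algebra.TensorProduct.one_def, one_smul]

theorem Lm_split (a : B) (x : Rt k B X) : Lm k X a x + Lm k X (1 - a) x = x := by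
  rw [← Lm_add, add_sub_cancel, Lm_one]

theorem IP_mono {I I' : Submodule Bᵐᵒᵖ B} (h : I ≤ I') : IP k I X ≤ IP k I' X :=
  Submodule.span_mono (by rintro _ ⟨b, hb, p, rfl⟩; exact ⟨b, h hb, p, rfl⟩)

theorem mem_of_span_lift {K I : Submodule Bᵐᵒᵖ B} (hI : IsCoatom I) (h : ¬ K ≤ I) :
    ∃ a ∈ K, 1 - a ∈ I := by
  have h1 : K ⊔ I = ⊤ := by
    rw [sup_comm]
    exact hI.2 _ (lt_of_le_of_ne le_sup_left fun h2 => h (h2 ▸ le_sup_right))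
  have h2 : (1 : B) ∈ K ⊔ I := h1 ▸ trivial
  obtain ⟨a, ha, b, hb, hab⟩ := Submodule.mem_sup.1 h2
  exact ⟨a, ha, by rwa [← hab, add_sub_cancel_left]⟩

theorem exists_surj_quot [FiniteDimensional k B]
    (hX : ∀ I : Submodule Bᵐᵒᵖ B, IsSimpleModule Bᵐᵒᵖ (B ⧸ I) →
        Nonempty (FF k I X ≃ₗ[Bᵐᵒᵖ] (B ⧸ I))) :
    ∃ (K : Submodule Bᵐᵒᵖ B) (h : Rt k B X →ₗ[Bᵐᵒᵖ] (B ⧸ K)), Function.Surjective h ∧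
      ∀ I : Submodule Bᵐᵒᵖ B, IsCoatom I → K ≤ I := by
  have := opArt k B
  have : Module.Finite Bᵐᵒᵖ B := finOp
  let T : Set (Submodule Bᵐᵒᵖ B) := {K | ∃ h : Rt k B X →ₗ[Bᵐᵒᵖ] (B ⧸ K), Function.Surjective h ∧
    IP k K X ≤ LinearMap.ker h}
  have hT : T.Nonempty := ⟨⊤, 0, fun x => ⟨0, Subsingleton.elim _ _⟩, by simp⟩
  obtain ⟨K, ⟨h, hs, hk⟩, hmin⟩ := IsArtinian.set_has_minimal T hT
  refine ⟨K, h, hs, fun I hI => ?_⟩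
  by_contra hKI
  obtain ⟨a, haK, haI⟩ := mem_of_span_lift hI hKI
  obtain ⟨e⟩ := hX I (isSimpleModule_iff_isCoatom.2 hI)
  let h2 : Rt k B X →ₗ[Bᵐᵒᵖ] (B ⧸ I) := e.toLinearMap ∘ₗ (IP k I X).mkQ
  have hs2 : Function.Surjective h2 := e.surjective.comp (IP k I X).mkQ_surjective
  have hk2 : IP k I X ≤ LinearMap.ker h2 := by
    intro x hx
    change e ((IP k I X).mkQ x) = 0
    rw [(Submodule.Quotient.mk_eq_zero _).2 hx |> fun h => (h : (IP k I X).mkQ x = 0), map_zero]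
  let g : B →ₗ[Bᵐᵒᵖ] (B ⧸ K) × (B ⧸ I) := K.mkQ.prod I.mkQ
  have hgs : Function.Surjective g := by
    rintro ⟨y, z⟩
    obtain ⟨y, rfl⟩ := K.mkQ_surjective y
    obtain ⟨z, rfl⟩ := I.mkQ_surjective z
    refine ⟨(1 - a) * y + a * z, Prod.ext ?_ ?_⟩
    · refine (Submodule.Quotient.eq K).2 ?_
      have : (1 - a) * y + a * z - y = MulOpposite.op (z - y) • a := by
        rw [MulOpposite.smul_eq_mul_unop, MulOpposite.unop_op]; noncomm_ring
      rw [this]; exact K.smul_mem _ haK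
    · refine (Submodule.Quotient.eq I).2 ?_
      have : (1 - a) * y + a * z - z = MulOpposite.op (y - z) • (1 - a) := by
        rw [MulOpposite.smul_eq_mul_unop, MulOpposite.unop_op]; noncomm_ring
      rw [this]; exact I.smul_mem _ haI
  have hker : LinearMap.ker g = K ⊓ I := by
    rw [LinearMap.ker_prod, Submodule.ker_mkQ, Submodule.ker_mkQ]
  let h3 : Rt k B X →ₗ[Bᵐᵒᵖ] (B ⧸ K) × (B ⧸ I) := h.prod h2
  have hs3 : Function.Surjective h3 := by
    rintro ⟨y, z⟩
    obtain ⟨y, rfl⟩ := hs y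
    obtain ⟨z, rfl⟩ := hs2 z
    have e1 : ∀ x, h (Lm k X a x) = 0 := fun x => hk (Lm_mem haK x)
    have e2 : ∀ x, h2 (Lm k X (1 - a) x) = 0 := fun x => hk2 (Lm_mem haI x)
    refine ⟨Lm k X (1 - a) y + Lm k X a z, Prod.ext ?_ ?_⟩
    · change h _ = h y
      conv_rhs => rw [← Lm_split a y]
      rw [map_add, map_add, e1, e1, zero_add, add_zero]
    · change h2 _ = h2 z
      conv_rhs => rw [← Lm_split a z]
      rw [map_add, map_add, e2, e2, zero_add, add_zero]
  have hmem : LinearMap.ker g ∈ T := by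
    let E := g.quotKerEquivOfSurjective hgs
    refine ⟨E.symm.toLinearMap ∘ₗ h3, E.symm.surjective.comp hs3, ?_⟩
    intro x hx
    rw [hker] at hx
    have e1 : h x = 0 := hk (IP_mono inf_le_left hx)
    have e2 : h2 x = 0 := hk2 (IP_mono inf_le_right hx)
    have e3 : h3 x = 0 := Prod.ext e1 e2
    change E.symm (h3 x) = 0
    rw [e3, map_zero]
  have h5 := hmin _ hmem
  rw [hker] at h5
  exact h5 (lt_of_le_of_ne inf_le_left fun h => hKI (inf_eq_left.1 h))

/-- `B` and its opposite as right modules. -/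
def opEquiv (B : Type) [Ring B] : Bᵐᵒᵖ ≃ₗ[Bᵐᵒᵖ] B :=
  { MulOpposite.opAddEquiv.symm with map_smul' := fun b x => by simp }

theorem exists_surj [FiniteDimensional k B] (hp : Module.Projective Bᵐᵒᵖ (Rt k B X))
    (hX : ∀ I : Submodule Bᵐᵒᵖ B, IsSimpleModule Bᵐᵒᵖ (B ⧸ I) →
        Nonempty (FF k I X ≃ₗ[Bᵐᵒᵖ] (B ⧸ I))) :
    ∃ f : Rt k B X →ₗ[Bᵐᵒᵖ] B, Function.Surjective f := by
  have := opArt k B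
  obtain ⟨K, h, hs, hK⟩ := exists_surj_quot hX
  obtain ⟨f, hf⟩ := Module.projective_lifting_property K.mkQ h K.mkQ_surjective
  refine ⟨f, nak_surj f ?_⟩
  rw [eq_top_iff]
  intro x _
  obtain ⟨y, hy⟩ := hs (K.mkQ x)
  rw [← hf] at hy
  have h1 : x - f y ∈ K := (Submodule.Quotient.eq K).1 hy.symm
  have h2 : MulOpposite.op (x - f y) ∈ Ring.jacobson Bᵐᵒᵖ := by
    unfold Ring.jacobson Module.jacobson
    rw [Submodule.mem_sInf]
    intro m hm
    have h3 := hK (m.map (opEquiv B).toLinearMap)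
      ((OrderIso.isCoatom_iff (Submodule.orderIsoMapComap (opEquiv B)) m).2 hm)
    obtain ⟨c, hc, hc'⟩ := h3 h1
    rw [← hc']
    exact hc
  have h3 : x - f y ∈ Ring.jacobson Bᵐᵒᵖ • (⊤ : Submodule Bᵐᵒᵖ B) := by
    have := Submodule.smul_mem_smul h2 (Submodule.mem_top : (1 : B) ∈ (⊤ : Submodule Bᵐᵒᵖ B))
    rwa [MulOpposite.smul_eq_mul_unop, one_mul, MulOpposite.unop_op] at this
  exact Submodule.mem_sup.2 ⟨f y, ⟨y, rfl⟩, _, h3, by abel⟩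

end Back4

section Len
variable {R : Type} [Ring R] {M Y : Type} [AddCommGroup M] [Module R M] [AddCommGroup Y] [Module R Y]

theorem length_step (N0 N : Submodule R M) (A : Submodule R Y) (g : Y →ₗ[R] M)
    (h1 : N ≤ N0 ⊔ LinearMap.range g) (h2 : A ≤ N0.comap g) :
    Module.length R N ≤ Module.length R N0 + Module.length R (Y ⧸ A) := by
  let q : N →ₗ[R] (M ⧸ N0) := N0.mkQ ∘ₗ N.subtype
  have e1 := Module.length_eq_add_of_exact (LinearMap.ker q).subtype q.rangeRestrict
    (Submodule.subtype_injective _) q.surjective_rangeRestrict (by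
      rw [LinearMap.exact_iff, LinearMap.ker_rangeRestrict, Submodule.range_subtype])
  rw [e1]
  refine add_le_add ?_ ?_
  · let j : LinearMap.ker q →ₗ[R] N0 := LinearMap.codRestrict N0 (N.subtype ∘ₗ (LinearMap.ker q).subtype)
      (fun x => (Submodule.Quotient.mk_eq_zero N0).1 x.2)
    refine Module.length_le_of_injective j ?_
    intro x y hxy
    apply Subtype.ext
    apply Subtype.ext
    exact congrArg (fun z : N0 => (z : M)) hxy
  · have h3 : LinearMap.range q ≤ LinearMap.range (A.mapQ N0 g h2) := by
      rintro _ ⟨x, rfl⟩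
      obtain ⟨a, ha, _, ⟨b, rfl⟩, hab⟩ := Submodule.mem_sup.1 (h1 x.2)
      refine ⟨A.mkQ b, ?_⟩
      refine (Submodule.Quotient.eq N0).2 ?_
      change g b - (x : M) ∈ N0
      rw [← hab, sub_add_cancel_right]
      exact N0.neg_mem ha
    exact (Module.length_le_of_injective _ (Submodule.inclusion_injective h3)).trans
      (Module.length_le_of_surjective _ (A.mapQ N0 g h2).surjective_rangeRestrict)

theorem length_covBy {N0 N : Submodule R M} (h : N0 ⋖ N) :
    Module.length R N = Module.length R N0 + 1 := by
  have hs := (covBy_iff_quot_is_simple h.le).1 h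
  rw [Module.length_eq_add_of_exact (Submodule.inclusion h.le) (Submodule.comap N.subtype N0).mkQ
    (Submodule.inclusion_injective h.le) (Submodule.mkQ_surjective _) (by
      rw [LinearMap.exact_iff, Submodule.ker_mkQ, Submodule.range_inclusion]),
    Module.length_eq_one R (N ⧸ Submodule.comap N.subtype N0)]

end Len

section Back5
variable {k B : Type} [Field k] [Ring B] [Algebra k B]
variable {X : Type} [AddCommGroup X] [Module (Env k B) X]

/-- left multiplication -/
def lmB (b : B) : B →ₗ[Bᵐᵒᵖ] B where
  toFun x := b * x
  map_add' x y := mul_add _ _ _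
  map_smul' c x := by simp [mul_assoc]

theorem length_le [FiniteDimensional k B]
    (hX : ∀ I : Submodule Bᵐᵒᵖ B, IsSimpleModule Bᵐᵒᵖ (B ⧸ I) →
        Nonempty (FF k I X ≃ₗ[Bᵐᵒᵖ] (B ⧸ I))) :
    Module.length Bᵐᵒᵖ (Rt k B X) ≤ Module.length Bᵐᵒᵖ B := by
  have := opArt k B
  have : Module.Finite Bᵐᵒᵖ B := finOp
  let T : Set (Submodule Bᵐᵒᵖ B) := {I | Module.length Bᵐᵒᵖ (IP k I X) ≤ Module.length Bᵐᵒᵖ I}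
  have hT : T.Nonempty := by
    refine ⟨⊥, ?_⟩
    have : IP k (⊥ : Submodule Bᵐᵒᵖ B) X = ⊥ := by
      unfold IP
      rw [Submodule.span_eq_bot]
      rintro _ ⟨b, hb, p, rfl⟩
      rw [(Submodule.mem_bot _).1 hb, zero_tmul, zero_smul (Env k B) p, map_zero]
    change Module.length Bᵐᵒᵖ (IP k _ X) ≤ _
    rw [this, Module.length_bot]
    exact zero_le
  obtain ⟨I0, hI0, hmax⟩ := set_has_maximal_iff_noetherian.2 (inferInstance : IsNoetherian Bᵐᵒᵖ B) T hT
  have htop : I0 = ⊤ := by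
    by_contra hne
    obtain ⟨I, hcov, -⟩ := exists_covBy_le_of_lt (lt_top_iff_ne_top.2 hne)
    refine hmax I ?_ hcov.lt
    obtain ⟨b, hb, hb0⟩ := SetLike.exists_of_lt hcov.lt
    have hsup : I = I0 ⊔ LinearMap.range (lmB b) := by
      have h1 : I0 < I0 ⊔ LinearMap.range (lmB b) := by
        refine lt_of_le_of_ne le_sup_left fun h => hb0 ?_
        rw [h]
        exact Submodule.mem_sup_right ⟨1, mul_one b⟩
      have h2 : I0 ⊔ LinearMap.range (lmB b) ≤ I := by
        refine sup_le hcov.le ?_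
        rintro _ ⟨c, rfl⟩
        exact I.smul_mem (MulOpposite.op c) hb
      exact (hcov.eq_or_eq h1.le h2).elim (fun h => (h1.ne' h).elim) (fun h => h.symm)
    let Jb : Submodule Bᵐᵒᵖ B := I0.comap (lmB b)
    have hJb : IsSimpleModule Bᵐᵒᵖ (B ⧸ Jb) := by
      have hs := (covBy_iff_quot_is_simple hcov.le).1 hcov
      let u : B →ₗ[Bᵐᵒᵖ] I := LinearMap.codRestrict I (lmB b) fun c => I.smul_mem (MulOpposite.op c) hb
      let v : B →ₗ[Bᵐᵒᵖ] (I ⧸ Submodule.comap I.subtype I0) := (Submodule.mkQ _) ∘ₗ u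
      have hv : LinearMap.ker v = Jb := by
        ext c
        exact Submodule.Quotient.mk_eq_zero _
      have hvs : Function.Surjective v := by
        refine (LinearMap.surjective_or_eq_zero v).resolve_right fun h => hb0 ?_
        have h1 : (1 : B) ∈ LinearMap.ker v := by rw [h]; simp
        rw [hv] at h1
        have h2 : b * 1 ∈ I0 := h1
        rwa [mul_one] at h2
      rw [← hv]
      exact IsSimpleModule.congr (v.quotKerEquivOfSurjective hvs)
    obtain ⟨e⟩ := hX Jb hJb
    have hl : Module.length Bᵐᵒᵖ (FF k Jb X) = 1 := by
      rw [e.length_eq]; exact Module.length_eq_one _ _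
    change Module.length Bᵐᵒᵖ (IP k I X) ≤ _
    rw [length_covBy hcov]
    refine (length_step (IP k I0 X) (IP k I X) (IP k Jb X) (Lm k X b) ?_ ?_).trans ?_
    · intro x hx
      obtain ⟨x, rfl⟩ := (Rt.of k B).surjective x
      refine IP_induction (C := fun x => Rt.of k B x ∈ IP k I0 X ⊔ LinearMap.range (Lm k X b))
        ?_ ?_ ?_ hx
      · rw [map_zero]; exact Submodule.zero_mem _
      · intro x y hx hy
        rw [map_add]; exact Submodule.add_mem _ hx hy
      · intro c hc p
        rw [hsup] at hc
        obtain ⟨a, ha, _, ⟨d, rfl⟩, rfl⟩ := Submodule.mem_sup.1 hc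
        rw [← Lm_of, Lm_add]
        refine Submodule.add_mem_sup (Lm_mem ha _) ⟨Lm k X d (Rt.of k B p), ?_⟩
        rw [← Lm_mul]; rfl
    · intro x hx
      obtain ⟨x, rfl⟩ := (Rt.of k B).surjective x
      refine IP_induction (C := fun x => Lm k X b (Rt.of k B x) ∈ IP k I0 X) ?_ ?_ ?_ hx
      · simp
      · intro x y hx hy
        rw [map_add, map_add]; exact Submodule.add_mem _ hx hy
      · intro c hc p
        rw [← Lm_of, ← Lm_mul]
        exact Lm_mem (I := I0) (b := b * c) hc (Rt.of k B p)
    · rw [hl]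
      exact add_le_add hI0 le_rfl
  have h1 : IP k (⊤ : Submodule Bᵐᵒᵖ B) X = ⊤ := by
    rw [eq_top_iff]
    intro x _
    rw [← Lm_one x]
    exact Lm_mem Submodule.mem_top x
  rw [htop] at hI0
  change Module.length Bᵐᵒᵖ (IP k _ X) ≤ _ at hI0
  rwa [h1, Module.length_top, Module.length_top] at hI0

theorem exists_right_iso [FiniteDimensional k B] (hp : Module.Projective Bᵐᵒᵖ (Rt k B X))
    (hX : ∀ I : Submodule Bᵐᵒᵖ B, IsSimpleModule Bᵐᵒᵖ (B ⧸ I) →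
        Nonempty (FF k I X ≃ₗ[Bᵐᵒᵖ] (B ⧸ I))) :
    Nonempty (Rt k B X ≃ₗ[Bᵐᵒᵖ] B) := by
  have := opArt k B
  have : Module.Finite Bᵐᵒᵖ B := finOp
  obtain ⟨f, hf⟩ := exists_surj hp hX
  have h1 := length_le hX
  have h2 := Module.length_eq_add_of_exact (LinearMap.ker f).subtype f
    (Submodule.subtype_injective _) hf (LinearMap.exact_subtype_ker_map f)
  rw [h2] at h1
  have h3 : Module.length Bᵐᵒᵖ B ≠ ⊤ := Module.length_ne_top
  have h4 : Module.length Bᵐᵒᵖ (LinearMap.ker f) = 0 := by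
    have h5 : Module.length Bᵐᵒᵖ (LinearMap.ker f) + Module.length Bᵐᵒᵖ B
      ≤ 0 + Module.length Bᵐᵒᵖ B := by rwa [zero_add]
    exact nonpos_iff_eq_zero.1 ((ENat.add_le_add_iff_right h3).1 h5)
  rw [Module.length_eq_zero_iff] at h4
  refine ⟨LinearEquiv.ofBijective f ⟨?_, hf⟩⟩
  rw [← LinearMap.ker_eq_bot]
  exact (Submodule.subsingleton_iff_eq_bot).1 h4

theorem faithful [FiniteDimensional k B] (hp : Module.Projective B (Lt k B X))
    (hX : ∀ I : Submodule Bᵐᵒᵖ B, IsSimpleModule Bᵐᵒᵖ (B ⧸ I) →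
        Nonempty (FF k I X ≃ₗ[Bᵐᵒᵖ] (B ⧸ I))) (b : B)
    (hb : ∀ x : X, (b ⊗ₜ 1 : Env k B) • x = 0) : b = 0 := by
  have := opArt k B
  have : Module.Finite Bᵐᵒᵖ B := finOp
  let τ : Submodule Bᵐᵒᵖ B := Submodule.span Bᵐᵒᵖ
    {y | ∃ (g : Lt k B X →ₗ[B] B) (x : Lt k B X), y = g x}
  have hτ : τ = ⊤ := by
    refine (eq_top_or_exists_le_coatom τ).resolve_right ?_
    rintro ⟨I, hI, hle⟩
    have hs := isSimpleModule_iff_isCoatom.2 hI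
    obtain ⟨e⟩ := hX I hs
    have : Nontrivial (B ⧸ I) := IsSimpleModule.nontrivial Bᵐᵒᵖ _
    have : Nontrivial (FF k I X) := e.toEquiv.nontrivial
    obtain ⟨y, hy⟩ := exists_ne (0 : FF k I X)
    refine hy ?_
    obtain ⟨x, rfl⟩ := FF.mk_surj _ y
    rw [FF.mk_eq_zero]
    obtain ⟨s, hs⟩ := Module.projective_def'.1 hp
    have h1 : ∀ z, (Finsupp.linearCombination B id) (s z) = z := fun z => LinearMap.congr_fun hs z
    have h2 := h1 (Lt.of k B x)
    rw [Finsupp.linearCombination_apply, Finsupp.sum] at h2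
    have h3 : x = ∑ a ∈ (s (Lt.of k B x)).support,
        ((s (Lt.of k B x)) a ⊗ₜ 1 : Env k B) • (Lt.of k B).symm a := by
      apply (Lt.of k B).injective
      rw [map_sum]
      exact h2.symm
    rw [h3, map_sum]
    refine Submodule.sum_mem _ fun a _ => mem_IP (hle (Submodule.subset_span ?_)) _
    exact ⟨Finsupp.lapply a ∘ₗ s, Lt.of k B x, rfl⟩
  have h1 : τ ≤ LinearMap.ker (lmB b) := by
    refine Submodule.span_le.2 ?_
    rintro _ ⟨g, x, rfl⟩
    obtain ⟨x, rfl⟩ := (Lt.of k B).surjective x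
    change b * g _ = 0
    rw [← smul_eq_mul, ← map_smul, Lt.smul_of, hb, map_zero, map_zero]
  rw [hτ] at h1
  have h2 : b * 1 = 0 := h1 (Submodule.mem_top : (1 : B) ∈ _)
  rwa [mul_one] at h2

theorem exists_twist [FiniteDimensional k B] (X : ModuleCat.{0} (Env k B))
    (hl : Module.Projective B (Lt k B X))
    (hp : Module.Projective Bᵐᵒᵖ (Rt k B X))
    (hX : ∀ I : Submodule Bᵐᵒᵖ B, IsSimpleModule Bᵐᵒᵖ (B ⧸ I) →
        Nonempty (FF k I X ≃ₗ[Bᵐᵒᵖ] (B ⧸ I))) :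
    ∃ φ : B ≃ₐ[k] B, Nonempty (X ≃ₗ[Env k B] twistedBimodule k B φ) := by
  obtain ⟨f⟩ := exists_right_iso hp hX
  let u : Rt k B X := f.symm 1
  have hu : f u = 1 := f.apply_symm_apply 1
  have key : ∀ y, y = MulOpposite.op (f y) • u := by
    intro y
    apply f.injective
    rw [map_smul, hu, MulOpposite.smul_eq_mul_unop, one_mul, MulOpposite.unop_op]
  have key2 : ∀ b y, f (Lm k X b y) = f (Lm k X b u) * f y := by
    intro b y
    conv_lhs => rw [key y]
    rw [map_smul, map_smul]; rfl
  let ψ : B →ₐ[k] B :=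
    { toFun := fun b => f (Lm k X b u)
      map_one' := by rw [Lm_one, hu]
      map_mul' := fun b c => by rw [Lm_mul, key2]
      map_zero' := by
        have h := Lm_add (k := k) (0 : B) 0 u
        rw [add_zero, left_eq_add] at h
        rw [h, map_zero]
      map_add' := fun b c => by rw [Lm_add, map_add]
      commutes' := fun r => by
        have h : Lm k X (algebraMap k B r) u = algebraMap k Bᵐᵒᵖ r • u := by
          obtain ⟨v, hv⟩ := (Rt.of k B).surjective u
          rw [← hv, Lm_of, Rt.smul_of, Algebra.algebraMap_eq_smul_one, Algebra.algebraMap_eq_smul_one,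
            smul_tmul]
        rw [h, map_smul, hu, MulOpposite.smul_eq_mul_unop, one_mul]
        rfl }
  have hψ : ∀ b, ψ b = f (Lm k X b u) := fun b => rfl
  have hinj : Function.Injective ψ := by
    rw [injective_iff_map_eq_zero]
    intro b hb
    refine faithful hl hX b fun x => ?_
    have h := key2 b (Rt.of k B x)
    rw [← hψ, hb, zero_mul, Lm_of] at h
    have h2 := f.injective (h.trans (map_zero f).symm)
    exact (Rt.of k B).injective (h2.trans (map_zero _).symm)
  have hbij : Function.Bijective ψ :=
    ⟨hinj, (LinearMap.injective_iff_surjective (f := ψ.toLinearMap)).1 hinj⟩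
  let E : B ≃ₐ[k] B := AlgEquiv.ofBijective ψ hbij
  have hE : ∀ b, E.symm (f (Lm k X b u)) = b := fun b => E.symm_apply_apply b
  let F : X ≃+ twistedBimodule k B E.symm :=
    (Rt.of k B).trans (f.toAddEquiv.trans (E.symm.toAddEquiv.trans (Tw.of k B E.symm)))
  have hF : ∀ x, F x = Tw.of k B E.symm (E.symm (f (Rt.of k B x))) := fun x => rfl
  refine ⟨E.symm, ⟨{ F with map_smul' := fun a x => ?_ }⟩⟩
  change F (a • x) = a • F x
  induction a using TensorProduct.induction_on with
  | zero => rw [zero_smul (Env k B) x, zero_smul (Env k B) (F x), map_zero]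
  | add a b ha hb => rw [add_smul (R := Env k B) a b x, add_smul (R := Env k B) a b (F x), map_add, ha, hb]
  | tmul b c =>
    rw [hF, hF, Tw.smul_of, ← RL, ← Rt.smul_of, ← Lm_of, map_smul, key2,
      MulOpposite.smul_eq_mul_unop, map_mul E.symm, map_mul E.symm, hE]

theorem backward [FiniteDimensional k B] (hr : RadHyp k B)
    (h : ∀ (M : Type) [AddCommGroup M] [Module Bᵐᵒᵖ M], IsSimpleModule Bᵐᵒᵖ M →
        ∃ m : ℕ, 1 ≤ m ∧
          HasProjExactSeq Bᵐᵒᵖ (ModuleCat.of Bᵐᵒᵖ M) (ModuleCat.of Bᵐᵒᵖ M) m) :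
    IsTwistedPeriodicAlgebra k B := by
  have := opArt k B
  simp only [hasProjExactSeq_iff] at h
  obtain ⟨n, hn⟩ := common_period h
  obtain ⟨X, hX1, hX2, hX3⟩ := exists_X (k := k) hr n hn
  obtain ⟨φ, ⟨e⟩⟩ := exists_twist X (hX2.left_proj (Reg.left_proj k B))
    (hX2.right_proj (Reg.right_proj k B)) hX3
  refine ⟨n + 1, φ, Nat.succ_pos n, ?_⟩
  rw [hasProjExactSeq_iff]
  exact hX2.congr_left e

end Back5

/-- Let `B` be a finite-dimensional `k`-algebra such that `B/rad B` is a
separable `k`-algebra (i.e. for every field extension `K/k` and every realisation `S` of the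
quotient of `B` by its Jacobson radical, `K ⊗[k] S` is semisimple). Then `B` is twisted
periodic if and only if every simple right `B`-module (= simple left `Bᵐᵒᵖ`-module) is
`Ω`-periodic, i.e. admits an exact sequence `0 → M → Q_{m-1} → ⋯ → Q_0 → M → 0` with all
`Q_i` projective. -/
theorem isTwistedPeriodicAlgebra_iff_simples_omega_periodic
    (k B : Type) [Field k] [Ring B] [Algebra k B] [FiniteDimensional k B]
    (hsep : ∀ (S : Type) [Ring S] [Algebra k S] (π : B →ₐ[k] S),
      Function.Surjective π → RingHom.ker π = Ideal.jacobson (⊥ : Ideal B) →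
      ∀ (K : Type) [Field K] [Algebra k K], IsSemisimpleRing (K ⊗[k] S)) :
    IsTwistedPeriodicAlgebra k B ↔
      ∀ (M : Type) [AddCommGroup M] [Module Bᵐᵒᵖ M], IsSimpleModule Bᵐᵒᵖ M →
        ∃ m : ℕ, 1 ≤ m ∧
          HasProjExactSeq Bᵐᵒᵖ (ModuleCat.of Bᵐᵒᵖ M) (ModuleCat.of Bᵐᵒᵖ M) m := by
  constructor
  · intro h M _ _ hM
    exact forward k B h M hM
  · intro h
    exact backward (radHyp k B hsep) h
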